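/- arXiv:1409.2117 — 4 statements merged into one kernel-verified Lean document; each statement's English description precedes it below -/
import Mathlib

section
/- Every connected vertex-transitive non-bipartite simple graph of even order at least 6 whose common vertex degree is at least 5 is 2-extendable. -/
open SimpleGraph

section Defs

variable {V : Type*}

/-- A simple graph is vertex-transitive if any vertex can be mapped to any other
by a graph automorphism. -/
def VertexTransitive (G : SimpleGraph V) : Prop :=
  ∀ x y : V, ∃ φ : G ≃g G, φ x = y

/-- A graph is `p`-factor-critical if the removal of any set of `p` vertices
results in a graph with a perfect matching. -/
def PFactorCritical (G : SimpleGraph V) (p : ℕ) : Prop :=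
  ∀ X : Set V, X.ncard = p → ∃ M : (G.induce Xᶜ).Subgraph, M.IsPerfectMatching

/-- A graph is factor-critical if the removal of any single vertex results in a
graph with a perfect matching. -/
def IsFactorCritical {W : Type*} (H : SimpleGraph W) : Prop :=
  ∀ v : W, ∃ M : (H.induce ({v}ᶜ : Set W)).Subgraph, M.IsPerfectMatching

/-- `∇(X)`: the set of edges of `G` with exactly one end in `X`. -/
def edgeBoundary (G : SimpleGraph V) (X : Set V) : Set (Sym2 V) :=
  {e | e ∈ G.edgeSet ∧ ∃ x ∈ X, ∃ y ∈ Xᶜ, e = s(x, y)}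

/-- The set of edges of `G` with both ends in `X`. -/
def edgesWithin (G : SimpleGraph V) (X : Set V) : Set (Sym2 V) :=
  {e | e ∈ G.edgeSet ∧ ∀ v ∈ e, v ∈ X}

/-- The set of edges of `G` with one end in `A` and the other end in `S \ A`
(i.e. the edge boundary of `A` inside the induced subgraph `G[S]` when `A ⊆ S`). -/
def inducedEdgeBoundary (G : SimpleGraph V) (S A : Set V) : Set (Sym2 V) :=
  {e | e ∈ G.edgeSet ∧ ∃ x ∈ A, ∃ y ∈ S \ A, e = s(x, y)}

/-- `F` is an `s`-restricted edge-cut of `G` if deleting `F` disconnects `G` and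
every component of `G − F` has at least `s` vertices. -/
def IsRestrictedEdgeCut (G : SimpleGraph V) (s : ℕ) (F : Set (Sym2 V)) : Prop :=
  F ⊆ G.edgeSet ∧ ¬ (G.deleteEdges F).Connected ∧
    ∀ c : (G.deleteEdges F).ConnectedComponent, s ≤ c.supp.ncard

/-- `λ_s(G)`: the minimum cardinality of an `s`-restricted edge-cut of `G`. -/
noncomputable def lambdaS (G : SimpleGraph V) (s : ℕ) : ℕ :=
  sInf (Set.ncard '' {F | IsRestrictedEdgeCut G s F})

/-- A `λ_s`-fragment: a vertex set whose edge boundary is an `s`-restricted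
edge-cut of minimum cardinality `λ_s(G)`. -/
def IsLambdaFragment (G : SimpleGraph V) (s : ℕ) (X : Set V) : Prop :=
  IsRestrictedEdgeCut G s (edgeBoundary G X) ∧ (edgeBoundary G X).ncard = lambdaS G s

/-- A `λ_s`-atom: a `λ_s`-fragment of minimum cardinality. -/
def IsLambdaAtom (G : SimpleGraph V) (s : ℕ) (X : Set V) : Prop :=
  IsLambdaFragment G s X ∧ ∀ Y : Set V, IsLambdaFragment G s Y → X.ncard ≤ Y.ncard

/-- The odd girth of `G`: the length of a shortest odd cycle of `G`. -/
noncomputable def oddGirth (G : SimpleGraph V) : ℕ :=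
  sInf {n | Odd n ∧ ∃ (v : V) (c : G.Walk v v), c.IsCycle ∧ c.length = n}

/-- `X` is an independent set of `G`. -/
def IsIndependentSet (G : SimpleGraph V) (X : Set V) : Prop :=
  ∀ x ∈ X, ∀ y ∈ X, ¬ G.Adj x y

/-- The independence number `α(G)`. -/
noncomputable def indepNum (G : SimpleGraph V) : ℕ :=
  sSup {n | ∃ X : Set V, IsIndependentSet G X ∧ X.ncard = n}

/-- The number of trivial (single-vertex) components of `G − X`. -/
noncomputable def trivialComponentCount (G : SimpleGraph V) (X : Set V) : ℕ :=
  {c : (G.induce Xᶜ).ConnectedComponent | c.supp.ncard = 1}.ncard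

/-- The number of odd components of `G − X`. -/
noncomputable def oddComponentCount (G : SimpleGraph V) (X : Set V) : ℕ :=
  {c : (G.induce Xᶜ).ConnectedComponent | Odd c.supp.ncard}.ncard

/-- The number of nontrivial components of `G − X`. -/
noncomputable def nontrivialComponentCount (G : SimpleGraph V) (X : Set V) : ℕ :=
  {c : (G.induce Xᶜ).ConnectedComponent | 2 ≤ c.supp.ncard}.ncard

/-- An imprimitive block of `G`: a proper non-empty vertex set that every
automorphism either fixes setwise or maps to a disjoint set. -/
def IsImprimitiveBlock (G : SimpleGraph V) (X : Set V) : Prop :=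
  X.Nonempty ∧ X ≠ Set.univ ∧ ∀ φ : G ≃g G, (⇑φ) '' X = X ∨ ((⇑φ) '' X) ∩ X = ∅

/-- A connected graph is `q`-extendable if it has a perfect matching and every
matching of size `q` is contained in a perfect matching. -/
def Extendable (G : SimpleGraph V) (q : ℕ) : Prop :=
  (∃ M : G.Subgraph, M.IsPerfectMatching) ∧
    ∀ M : G.Subgraph, M.IsMatching → M.edgeSet.ncard = q →
      ∃ P : G.Subgraph, P.IsPerfectMatching ∧ M ≤ P

end Defs

set_option linter.unusedSectionVars false

namespace TwoExt

section Edges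

variable {V : Type*} [Fintype V] [DecidableEq V] (G : SimpleGraph V) [DecidableRel G.Adj]

/-- number of ordered adjacent pairs from `S` to `T` -/
def ec (S T : Finset V) : ℕ := ∑ u ∈ S, ∑ v ∈ T, if G.Adj u v then 1 else 0

/-- size of the edge boundary -/
def bd (S : Finset V) : ℕ := ec G S Sᶜ

lemma ec_comm (S T : Finset V) : ec G S T = ec G T S := by
  unfold ec
  rw [Finset.sum_comm]
  simp only [G.adj_comm]

lemma ec_union_right {S T U : Finset V} (h : Disjoint T U) :
    ec G S (T ∪ U) = ec G S T + ec G S U := by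
  unfold ec
  simp only [Finset.sum_union h, Finset.sum_add_distrib]

lemma ec_union_left {S T U : Finset V} (h : Disjoint T U) :
    ec G (T ∪ U) S = ec G T S + ec G U S := by
  unfold ec
  rw [Finset.sum_union h]

lemma ec_mono {S S' T T' : Finset V} (h : S ⊆ S') (h' : T ⊆ T') : ec G S T ≤ ec G S' T' := by
  unfold ec
  refine (Finset.sum_le_sum fun u _ => Finset.sum_le_sum_of_subset h').trans ?_
  exact Finset.sum_le_sum_of_subset h

lemma ec_univ {k : ℕ} (hreg : G.IsRegularOfDegree k) (S : Finset V) :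
    ec G S Finset.univ = k * S.card := by
  unfold ec
  have : ∀ u ∈ S, (∑ v, if G.Adj u v then 1 else 0) = k := by
    intro u _
    rw [← hreg u, Finset.sum_boole, ← G.card_neighborFinset_eq_degree]
    simp [SimpleGraph.neighborFinset_eq_filter]
  rw [Finset.sum_congr rfl this]
  simp [mul_comm]

lemma ec_split (S T : Finset V) : ec G S Finset.univ = ec G S T + ec G S Tᶜ := by
  rw [← ec_union_right G disjoint_compl_right, Finset.union_compl]

lemma bd_compl (S : Finset V) : bd G Sᶜ = bd G S := by
  unfold bd
  rw [compl_compl, ec_comm]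

lemma deg_eq {k : ℕ} (hreg : G.IsRegularOfDegree k) (S : Finset V) :
    k * S.card = ec G S S + bd G S := by
  rw [← ec_univ G hreg, ec_split G S S]; rfl

lemma ec_self_le (S : Finset V) : ec G S S + S.card ≤ S.card * S.card := by
  unfold ec
  have : ∀ u ∈ S, (∑ v ∈ S, if G.Adj u v then 1 else 0) + 1 ≤ S.card := by
    intro u hu
    rw [Finset.sum_boole]
    have h : S.filter (G.Adj u) ⊆ S.erase u := by
      intro v hv
      simp only [Finset.mem_filter] at hv
      exact Finset.mem_erase.2 ⟨hv.2.ne', hv.1⟩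
    have := Finset.card_le_card h
    rw [Finset.card_erase_of_mem hu] at this
    have hp : 0 < S.card := Finset.card_pos.2 ⟨u, hu⟩
    have e : ((S.filter fun x => G.Adj u x).card) = (S.filter (G.Adj u)).card := rfl
    simp only [Nat.cast_id]
    omega
  have h2 := Finset.sum_le_sum this
  rw [Finset.sum_add_distrib] at h2
  simpa using h2

lemma bd_lower {k : ℕ} (hreg : G.IsRegularOfDegree k) (S : Finset V) :
    k * S.card + S.card ≤ bd G S + S.card * S.card := by
  have := deg_eq G hreg S
  have := ec_self_le G S
  omega

lemma ec_self_even (S : Finset V) : Even (ec G S S) := by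
  induction S using Finset.induction_on with
  | empty => simp [ec]
  | insert a S ha ih =>
    rw [Finset.insert_eq, ec_union_left G (by simpa using ha), ec_union_right G (by simpa using ha),
      ec_union_right G (by simpa using ha), ec_comm G S {a}]
    have : ec G {a} {a} = 0 := by simp [ec]
    rw [this, zero_add, ← add_assoc]
    exact (Even.add ⟨_, rfl⟩ ih)

lemma bd_submod (S T : Finset V) : bd G (S ∩ T) + bd G (S ∪ T) ≤ bd G S + bd G T := by
  have key : ∀ S : Finset V, bd G S =
      ∑ u, ∑ v, if (u ∈ S ∧ v ∉ S) ∧ G.Adj u v then 1 else 0 := by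
    intro S
    unfold bd ec
    rw [← Finset.sum_filter_add_sum_filter_not Finset.univ (· ∈ S)
      (fun u => ∑ v, if (u ∈ S ∧ v ∉ S) ∧ G.Adj u v then 1 else 0)]
    rw [Finset.sum_eq_zero (s := Finset.univ.filter (· ∉ S)), add_zero, Finset.filter_mem_eq_inter,
      Finset.univ_inter]
    · refine Finset.sum_congr rfl fun u hu => ?_
      rw [← Finset.sum_filter_add_sum_filter_not Finset.univ (· ∈ S)
        (fun v => if (u ∈ S ∧ v ∉ S) ∧ G.Adj u v then 1 else 0)]
      rw [Finset.sum_eq_zero (s := Finset.univ.filter (· ∈ S)), zero_add]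
      · refine Finset.sum_congr (by ext; simp) fun v hv => ?_
        simp at hv
        simp [hu, hv]
      · intro v hv; simp at hv; simp [hv]
    · intro u hu; simp at hu; simp [hu]
  simp only [key, ← Finset.sum_add_distrib]
  refine Finset.sum_le_sum fun u _ => Finset.sum_le_sum fun v _ => ?_
  simp only [Finset.mem_inter, Finset.mem_union]
  by_cases h1 : u ∈ S <;> by_cases h2 : u ∈ T <;> by_cases h3 : v ∈ S <;> by_cases h4 : v ∈ T <;>
    by_cases h5 : G.Adj u v <;> simp [h1, h2, h3, h4, h5]

lemma bd_posimod (S T : Finset V) : bd G (S \ T) + bd G (T \ S) ≤ bd G S + bd G T := by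
  have := bd_submod G S Tᶜ
  rw [bd_compl G T] at this
  have h1 : S ∩ Tᶜ = S \ T := by ext; simp
  have h2 : S ∪ Tᶜ = (T \ S)ᶜ := by ext; simp; tauto
  rw [h1, h2, bd_compl] at this
  exact this

lemma ec_map (φ : G ≃g G) (S T : Finset V) :
    ec G (S.map φ.toEquiv.toEmbedding) (T.map φ.toEquiv.toEmbedding) = ec G S T := by
  unfold ec
  rw [Finset.sum_map]
  refine Finset.sum_congr rfl fun u _ => ?_
  rw [Finset.sum_map]
  refine Finset.sum_congr rfl fun v _ => ?_
  have : G.Adj (φ u) (φ v) ↔ G.Adj u v := φ.map_adj_iff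
  simp only [Equiv.coe_toEmbedding, RelIso.coe_fn_toEquiv, this]

lemma bd_map (φ : G ≃g G) (S : Finset V) : bd G (S.map φ.toEquiv.toEmbedding) = bd G S := by
  unfold bd
  have : (S.map φ.toEquiv.toEmbedding)ᶜ = Sᶜ.map φ.toEquiv.toEmbedding := by
    ext v
    simp [Finset.mem_map_equiv]
  rw [this, ec_map]

lemma bd_pos (hconn : G.Connected) {S : Finset V} (h1 : S.Nonempty) (h2 : S ≠ Finset.univ) :
    0 < bd G S := by
  by_contra h0
  have h0 : bd G S = 0 := by omega
  apply h2
  have hz : ∀ u ∈ S, ∀ v, G.Adj u v → v ∈ S := by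
    intro u hu v huv
    by_contra hv
    unfold bd ec at h0
    rw [Finset.sum_eq_zero_iff] at h0
    have := h0 u hu
    rw [Finset.sum_eq_zero_iff] at this
    have := this v (by simpa using hv)
    simp [huv] at this
  obtain ⟨a, ha⟩ := h1
  ext v
  simp only [Finset.mem_univ, iff_true]
  obtain ⟨p⟩ := hconn.preconnected a v
  clear h0
  induction p with
  | nil => exact ha
  | cons h p ih => exact ih (hz _ ha _ h)

lemma exists_lex_min {α : Type*} (s : Finset α) (hs : s.Nonempty) (f : α → ℤ) (g : α → ℕ) :
    ∃ a ∈ s, (∀ b ∈ s, f a ≤ f b) ∧ ∀ b ∈ s, f b ≤ f a → g a ≤ g b := by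
  obtain ⟨a0, ha0, h0⟩ := Finset.exists_min_image s f hs
  obtain ⟨a, ha, h⟩ := Finset.exists_min_image (s.filter fun b => f b ≤ f a0) g
    ⟨a0, by simp [ha0]⟩
  simp only [Finset.mem_filter] at ha h
  refine ⟨a, ha.1, fun b hb => ha.2.trans (h0 b hb), fun b hb hba => h b ⟨hb, hba.trans ha.2⟩⟩

/-- A block system obtained from a block. -/
lemma exists_blocks (hvt : VertexTransitive G) (A : Finset V) (hA : A.Nonempty)
    (hblock : ∀ φ : G ≃g G, (A.map φ.toEquiv.toEmbedding ∩ A).Nonempty →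
      A.map φ.toEquiv.toEmbedding = A) :
    ∃ blk : V → Finset V, (∀ v, v ∈ blk v) ∧ (∀ u v, u ∈ blk v → blk u = blk v) ∧
      (∀ v, ∃ φ : G ≃g G, blk v = A.map φ.toEquiv.toEmbedding) := by
  obtain ⟨a, ha⟩ := hA
  choose ψ hψ using fun v => hvt a v
  refine ⟨fun v => A.map (ψ v).toEquiv.toEmbedding, ?_, ?_, fun v => ⟨_, rfl⟩⟩
  · intro v
    exact Finset.mem_map.2 ⟨a, ha, hψ v⟩
  · intro u v huv
    have h1 : u ∈ A.map (ψ u).toEquiv.toEmbedding := Finset.mem_map.2 ⟨a, ha, hψ u⟩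
    have h := hblock ((ψ u).trans (ψ v).symm) ⟨(ψ v).symm u, by
      rw [Finset.mem_inter]
      constructor
      · exact Finset.mem_map.2 ⟨a, ha, by
          change (ψ v).symm (ψ u a) = _
          rw [hψ u]⟩
      · obtain ⟨b, hb, hbu⟩ := Finset.mem_map.1 huv
        have : (ψ v).symm u = b := by
          rw [← hbu]
          exact (ψ v).symm_apply_apply b
        rw [this]; exact hb⟩
    have h2 := congrArg (fun B : Finset V => B.map (ψ v).toEquiv.toEmbedding) h
    simp only [Finset.map_map] at h2
    beta_reduce
    rw [← h2]
    ext w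
    simp only [Finset.mem_map]
    refine exists_congr fun b => and_congr_right fun _ => ?_
    change (ψ u) b = w ↔ (ψ v) ((ψ v).symm (ψ u b)) = w
    rw [RelIso.apply_symm_apply]

lemma card_dvd_of_closed (blk : V → Finset V) (h1 : ∀ v, v ∈ blk v)
    (h2 : ∀ u v, u ∈ blk v → blk u = blk v) (a : ℕ) (h3 : ∀ v, (blk v).card = a)
    (S : Finset V) (hS : ∀ v ∈ S, blk v ⊆ S) : a ∣ S.card := by
  rw [Finset.card_eq_sum_card_image blk S]
  refine Finset.dvd_sum fun B hB => ?_
  obtain ⟨v, hv, rfl⟩ := Finset.mem_image.1 hB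
  have : S.filter (fun x => blk x = blk v) = blk v := by
    ext u
    simp only [Finset.mem_filter]
    constructor
    · rintro ⟨_, h⟩
      rw [← h]; exact h1 u
    · intro h
      exact ⟨hS v hv h, h2 u v h⟩
  rw [this, h3]

end Edges

end TwoExt
namespace TwoExt

lemma colorable_of_two_regular_even {β : Type*} [Fintype β] (Q : SimpleGraph β)
    (hc : Q.Connected) (h2 : ∀ v, (Q.neighborSet v).ncard = 2) (hev : Even (Fintype.card β)) :
    Q.Colorable 2 := by
  classical
  have hcyc : Q.IsCycles := fun v _ => h2 v
  obtain ⟨v⟩ := hc.nonempty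
  obtain ⟨p, hp, hpv⟩ := hcyc.exists_cycle_toSubgraph_verts_eq_connectedComponentSupp
    (c := Q.connectedComponentMk v) (v := v) (by simp)
    (Set.nonempty_of_ncard_ne_zero (by rw [h2]; norm_num))
  have hall : ∀ w, w ∈ p.support := by
    intro w
    rw [← SimpleGraph.Walk.mem_verts_toSubgraph, hpv]
    simp only [SimpleGraph.ConnectedComponent.mem_supp_iff, SimpleGraph.ConnectedComponent.eq]
    exact hc.preconnected w v
  have hidx : ∀ w, ∃ i, i < p.length ∧ p.getVert i = w := by
    intro w
    obtain ⟨i, hi, hle⟩ := SimpleGraph.Walk.mem_support_iff_exists_getVert.1 (hall w)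
    rcases hle.lt_or_eq with h | h
    · exact ⟨i, h, hi⟩
    · refine ⟨0, ?_, ?_⟩
      · have := hp.three_le_length; omega
      · rw [← hi, h, SimpleGraph.Walk.getVert_zero, SimpleGraph.Walk.getVert_length]
  choose idx hlt hget using hidx
  have hinj : ∀ i j, i < p.length → j < p.length → p.getVert i = p.getVert j → i = j := by
    intro i j hi hj h
    exact hp.getVert_injOn' (by simp; omega) (by simp; omega) h
  have hidx2 : ∀ i, i < p.length → idx (p.getVert i) = i := fun i hi =>
    hinj _ _ (hlt _) hi (hget _)
  have hlen : Even p.length := by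
    have : Fintype.card β = p.length := by
      rw [← Fintype.card_fin p.length]
      refine Fintype.card_congr ⟨fun w => ⟨idx w, hlt w⟩, fun i => p.getVert i, fun w => hget w, 
        fun i => ?_⟩
      ext
      exact hidx2 i i.2
    rwa [← this]
  have hpar : ∀ i, i ≤ p.length → idx (p.getVert i) % 2 = i % 2 := by
    intro i hi
    rcases hi.lt_or_eq with h | h
    · rw [hidx2 i h]
    · have h0 : p.getVert i = p.getVert 0 := by
        rw [h, SimpleGraph.Walk.getVert_zero, SimpleGraph.Walk.getVert_length]
      rw [h0, hidx2 0 (by have := hp.three_le_length; omega)]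
      rcases hlen with ⟨r, hr⟩
      omega
  refine ⟨SimpleGraph.Coloring.mk (fun w => (⟨idx w % 2, Nat.mod_lt _ (by norm_num)⟩ : Fin 2)) ?_⟩
  intro u w huw heq
  have hadj := (hp.adj_toSubgraph_iff_of_isCycles hcyc (v := u)
    (by rw [SimpleGraph.Walk.mem_verts_toSubgraph]; exact hall u) w).2 huw
  obtain ⟨i, hi, hil⟩ := SimpleGraph.Walk.toSubgraph_adj_iff _ |>.1 hadj
  have e1 := hpar i hil.le
  have e2 := hpar (i+1) hil
  have heq : idx u % 2 = idx w % 2 := by simpa using heq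
  rcases Sym2.eq_iff.1 hi with ⟨h1, h2⟩ | ⟨h1, h2⟩
  · rw [h1] at e1; rw [h2] at e2; omega
  · rw [h1] at e1; rw [h2] at e2; omega

end TwoExt
namespace TwoExt

section Nbhd

variable {V : Type*} [Fintype V] [DecidableEq V] (G : SimpleGraph V) [DecidableRel G.Adj]

/-- neighbourhood of a set of vertices -/
def nb (S : Finset V) : Finset V := Finset.univ.filter fun v => ∃ u ∈ S, G.Adj u v

lemma mem_nb {S : Finset V} {v : V} : v ∈ nb G S ↔ ∃ u ∈ S, G.Adj u v := by
  simp [nb]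

lemma nb_mono {S T : Finset V} (h : S ⊆ T) : nb G S ⊆ nb G T := by
  intro v hv
  rw [mem_nb] at *
  obtain ⟨u, hu, huv⟩ := hv
  exact ⟨u, h hu, huv⟩

lemma nb_submod (S T : Finset V) :
    (nb G (S ∩ T)).card + (nb G (S ∪ T)).card ≤ (nb G S).card + (nb G T).card := by
  have h1 : nb G (S ∪ T) = nb G S ∪ nb G T := by
    ext v
    simp only [mem_nb, Finset.mem_union]
    constructor
    · rintro ⟨u, hu | hu, h⟩
      · exact Or.inl ⟨u, hu, h⟩
      · exact Or.inr ⟨u, hu, h⟩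
    · rintro (⟨u, hu, h⟩ | ⟨u, hu, h⟩)
      · exact ⟨u, Or.inl hu, h⟩
      · exact ⟨u, Or.inr hu, h⟩
  have h2 : nb G (S ∩ T) ⊆ nb G S ∩ nb G T :=
    Finset.subset_inter (nb_mono G Finset.inter_subset_left) (nb_mono G Finset.inter_subset_right)
  have := Finset.card_le_card h2
  have := Finset.card_inter_add_card_union (nb G S) (nb G T)
  rw [h1]
  omega

lemma nb_map (φ : G ≃g G) (S : Finset V) :
    nb G (S.map φ.toEquiv.toEmbedding) = (nb G S).map φ.toEquiv.toEmbedding := by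
  ext v
  simp only [mem_nb, Finset.mem_map]
  constructor
  · rintro ⟨u, ⟨w, hw, rfl⟩, huv⟩
    refine ⟨φ.symm v, ⟨w, hw, ?_⟩, φ.apply_symm_apply v⟩
    rw [← φ.map_adj_iff, φ.apply_symm_apply]
    exact huv
  · rintro ⟨w, ⟨u, hu, huw⟩, rfl⟩
    exact ⟨φ u, ⟨u, hu, rfl⟩, φ.map_adj_iff.2 huw⟩

lemma card_le_card_nb {k : ℕ} (hk : 0 < k) (hreg : G.IsRegularOfDegree k) (S : Finset V) :
    S.card ≤ (nb G S).card := by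
  have h1 : ec G S Finset.univ = ec G S (nb G S) + ec G S (nb G S)ᶜ := ec_split G S _
  have h2 : ec G S (nb G S)ᶜ = 0 := by
    unfold ec
    refine Finset.sum_eq_zero fun u hu => Finset.sum_eq_zero fun v hv => ?_
    rw [if_neg]
    intro h
    exact (Finset.mem_compl.1 hv) ((mem_nb G).2 ⟨u, hu, h⟩)
  have h3 : ec G S (nb G S) ≤ ec G (nb G S) Finset.univ := by
    rw [ec_comm]; exact ec_mono G (Finset.Subset.refl _) (Finset.subset_univ _)
  rw [ec_univ G hreg] at h1 h3
  have : k * S.card ≤ k * (nb G S).card := by omega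
  exact Nat.le_of_mul_le_mul_left this hk

/-- duality -/
lemma nb_dual {S : Finset V} (h2 : nb G S ≠ Finset.univ) (h1 : S.Nonempty) :
    (nb G S)ᶜ.Nonempty ∧ nb G (nb G S)ᶜ ⊆ Sᶜ ∧ nb G (nb G S)ᶜ ≠ Finset.univ := by
  have h3 : nb G (nb G S)ᶜ ⊆ Sᶜ := by
    intro v hv
    rw [mem_nb] at hv
    obtain ⟨u, hu, huv⟩ := hv
    rw [Finset.mem_compl] at *
    intro hvS
    exact hu ((mem_nb G).2 ⟨v, hvS, huv.symm⟩)
  refine ⟨?_, h3, ?_⟩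
  · rw [Finset.nonempty_iff_ne_empty]
    intro h
    exact h2 (by rwa [Finset.compl_eq_empty_iff] at h)
  · intro h
    obtain ⟨s, hs⟩ := h1
    have : s ∈ nb G (nb G S)ᶜ := h ▸ Finset.mem_univ s
    exact (Finset.mem_compl.1 (h3 this)) hs

lemma nb_setup {k : ℕ} (hne : Nonempty V) (hvt : VertexTransitive G)
    (hreg : G.IsRegularOfDegree k) (hk : 0 < k) :
    ∃ (a h0 : ℕ) (blk : V → Finset V), 0 < a ∧
      (∀ v, v ∈ blk v) ∧ (∀ u v, u ∈ blk v → blk u = blk v) ∧ (∀ v, (blk v).card = a) ∧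
      (∀ v, (nb G (blk v)).card = a + h0 ∧ nb G (blk v) ≠ Finset.univ) ∧
      (∀ S : Finset V, S.Nonempty → nb G S ≠ Finset.univ → S.card + h0 ≤ (nb G S).card) ∧
      (∀ S : Finset V, S.Nonempty → nb G S ≠ Finset.univ → (nb G S).card ≤ S.card + h0 →
        S.card + a + h0 ≤ Fintype.card V → ∀ v ∈ S, blk v ⊆ S) ∧
      (∀ v, ∀ u ∈ nb G (blk v), blk u ⊆ nb G (blk v)) ∧
      (∀ u v, ∃ φ : G ≃g G, (blk u).map φ.toEquiv.toEmbedding = blk v) := by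
  classical
  obtain ⟨v0⟩ := hne
  obtain ⟨A, hA, hmin, hmin2⟩ := exists_lex_min
    (Finset.univ.filter fun S : Finset V => S.Nonempty ∧ nb G S ≠ Finset.univ)
    ⟨{v0}, by
      simp only [Finset.mem_filter, Finset.mem_univ, true_and, Finset.singleton_nonempty]
      intro h
      have : v0 ∈ nb G {v0} := h ▸ Finset.mem_univ v0
      simp [mem_nb] at this⟩
    (fun S => ((nb G S).card : ℤ) - S.card) Finset.card
  simp only [Finset.mem_filter, Finset.mem_univ, true_and] at hA hmin hmin2
  have hle := card_le_card_nb G hk hreg A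
  obtain ⟨h0, hh0⟩ := Nat.exists_eq_add_of_le hle
  have hm : ∀ S : Finset V, S.Nonempty → nb G S ≠ Finset.univ → S.card + h0 ≤ (nb G S).card := by
    intro S h1 h2
    have := hmin S ⟨h1, h2⟩
    omega
  have hm2 : ∀ S : Finset V, S.Nonempty → nb G S ≠ Finset.univ → (nb G S).card ≤ S.card + h0 →
      A.card ≤ S.card := by
    intro S h1 h2 h3
    exact hmin2 S ⟨h1, h2⟩ (by omega)
  -- dual sizes
  have hdual : ∀ S : Finset V, S.Nonempty → nb G S ≠ Finset.univ → (nb G S).card ≤ S.card + h0 →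
      (nb G (nb G S)ᶜ).card ≤ (nb G S)ᶜ.card + h0 := by
    intro S h1 h2 h3
    have h4 := Finset.card_le_card (nb_dual G h2 h1).2.1
    rw [Finset.card_compl] at *
    have := Finset.card_le_univ (nb G S)
    have := Finset.card_le_univ S
    have := hm S h1 h2
    omega
  have hAn : A.card + A.card + h0 ≤ Fintype.card V := by
    have h1 := nb_dual G hA.2 hA.1
    have h2 := hm2 _ h1.1 h1.2.2 (hdual A hA.1 hA.2 (by omega))
    rw [Finset.card_compl] at h2
    have := Finset.card_le_univ (nb G A)
    omega
  have hcl : ∀ S : Finset V, S.Nonempty → nb G S ≠ Finset.univ → (nb G S).card ≤ S.card + h0 →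
      S.card + A.card + h0 ≤ Fintype.card V → ∀ φ : G ≃g G,
      (A.map φ.toEquiv.toEmbedding ∩ S).Nonempty → A.map φ.toEquiv.toEmbedding ⊆ S := by
    intro S h1 h2 h3 h4 φ h5
    set B := A.map φ.toEquiv.toEmbedding with hB
    have hBc : B.card = A.card := by simp [hB]
    have hNB : (nb G B).card = A.card + h0 := by rw [hB, nb_map, Finset.card_map, hh0]
    have hsub := nb_submod G B S
    have hi : nb G (B ∩ S) ≠ Finset.univ := by
      intro h
      apply h2
      apply Finset.eq_univ_of_forall
      intro v
      exact nb_mono G Finset.inter_subset_right (h ▸ Finset.mem_univ v)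
    have hi2 := hm _ h5 hi
    have hip := Finset.card_pos.2 h5
    have hu : nb G (B ∪ S) ≠ Finset.univ := by
      intro h
      rw [h, Finset.card_univ] at hsub
      omega
    have hu2 := hm (B ∪ S) (h1.mono Finset.subset_union_right) hu
    have hcard := Finset.card_inter_add_card_union B S
    have h6 := hm2 _ h5 hi (by omega)
    have h7 : B ∩ S = B := Finset.eq_of_subset_of_card_le Finset.inter_subset_left (by omega)
    rw [← h7]
    exact Finset.inter_subset_right
  have hblock : ∀ φ : G ≃g G, (A.map φ.toEquiv.toEmbedding ∩ A).Nonempty →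
      A.map φ.toEquiv.toEmbedding = A := by
    intro φ h
    exact Finset.eq_of_subset_of_card_le (hcl A hA.1 hA.2 (by omega) hAn φ h) (by simp)
  obtain ⟨blk, hb1, hb2, hb3⟩ := exists_blocks G hvt A hA.1 hblock
  have hbc : ∀ v, (blk v).card = A.card := by
    intro v
    obtain ⟨φ, h⟩ := hb3 v
    rw [h, Finset.card_map]
  have hbn : ∀ v, (nb G (blk v)).card = A.card + h0 ∧ nb G (blk v) ≠ Finset.univ := by
    intro v
    obtain ⟨φ, h⟩ := hb3 v
    rw [h, nb_map, Finset.card_map]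
    refine ⟨hh0, fun h' => hA.2 ?_⟩
    rw [← Finset.card_eq_iff_eq_univ] at h' ⊢
    simpa using h'
  have hcl2 : ∀ S : Finset V, S.Nonempty → nb G S ≠ Finset.univ → (nb G S).card ≤ S.card + h0 →
        S.card + A.card + h0 ≤ Fintype.card V → ∀ v ∈ S, blk v ⊆ S := by
    intro S h1 h2 h3 h4 v hv
    obtain ⟨φ, h⟩ := hb3 v
    rw [h]
    refine hcl S h1 h2 h3 h4 φ ⟨v, ?_⟩
    rw [← h]
    exact Finset.mem_inter.2 ⟨hb1 v, hv⟩
  refine ⟨A.card, h0, blk, Finset.card_pos.2 hA.1, hb1, hb2, hbc, hbn, hm, hcl2, ?_, ?_⟩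
  · intro v u hu
    have hne : (blk v).Nonempty := ⟨v, hb1 v⟩
    have h1 := nb_dual G (hbn v).2 hne
    have h2 := hcl2 _ h1.1 h1.2.2 (hdual _ hne (hbn v).2 (by rw [(hbn v).1, hbc])) (by
      rw [Finset.card_compl, (hbn v).1]
      have := Finset.card_le_univ (nb G (blk v))
      have := (hbn v).1
      omega)
    intro w hw
    by_contra hwn
    have h3 := h2 w (Finset.mem_compl.2 hwn)
    rw [hb2 w u hw] at h3
    exact (Finset.mem_compl.1 (h3 (hb1 u))) hu
  · intro u v
    obtain ⟨φ, h⟩ := hb3 u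
    obtain ⟨ψ, h'⟩ := hb3 v
    refine ⟨φ.symm.trans ψ, ?_⟩
    rw [h, h', Finset.map_map]
    ext w
    simp only [Finset.mem_map]
    refine exists_congr fun b => and_congr_right fun _ => ?_
    change ψ (φ.symm (φ b)) = w ↔ ψ b = w
    rw [RelIso.symm_apply_apply]

end Nbhd

end TwoExt

namespace TwoExt

section NbMain

variable {V : Type*} [Fintype V] [DecidableEq V] (G : SimpleGraph V) [DecidableRel G.Adj]

lemma ec_eq_zero_iff (S T : Finset V) : ec G S T = 0 ↔ ∀ u ∈ S, ∀ v ∈ T, ¬ G.Adj u v := by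
  unfold ec
  simp only [Finset.sum_eq_zero_iff]
  refine forall₂_congr fun u _ => forall₂_congr fun v _ => ?_
  split_ifs with h <;> simp [h]

lemma closed_univ (hconn : G.Connected) {S : Finset V} (h1 : S.Nonempty)
    (h : ∀ u ∈ S, ∀ v, G.Adj u v → v ∈ S) : S = Finset.univ := by
  by_contra h2
  have := bd_pos G hconn h1 h2
  have h0 : bd G S = 0 := by
    unfold bd
    rw [ec_eq_zero_iff]
    intro u hu v hv huv
    exact (Finset.mem_compl.1 hv) (h u hu v huv)
  omega

lemma nb_bip {k : ℕ} (hk : 0 < k) (hreg : G.IsRegularOfDegree k) (A : Finset V)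
    (hA : (nb G A).card = A.card) : nb G (nb G A) = A := by
  have h1 : ec G A Finset.univ = ec G A (nb G A) + ec G A (nb G A)ᶜ := ec_split G A _
  have h2 : ec G A (nb G A)ᶜ = 0 := by
    rw [ec_eq_zero_iff]
    intro u hu v hv huv
    exact (Finset.mem_compl.1 hv) ((mem_nb G).2 ⟨u, hu, huv⟩)
  have h3 := ec_split G (nb G A) A
  rw [ec_univ G hreg] at h1 h3
  rw [hA, ec_comm G (nb G A) A] at h3
  have h4 : ec G (nb G A) Aᶜ = 0 := by omega
  rw [ec_eq_zero_iff] at h4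
  apply Finset.eq_of_subset_of_card_le
  · intro v hv
    obtain ⟨u, hu, huv⟩ := (mem_nb G).1 hv
    by_contra hvA
    exact h4 u hu v (Finset.mem_compl.2 hvA) huv
  · rw [← hA]
    exact card_le_card_nb G hk hreg _

lemma nb_h0_zero {k : ℕ} (hk : 0 < k) (hconn : G.Connected) (hnb : ¬ G.Colorable 2)
    (hreg : G.IsRegularOfDegree k) (A : Finset V) (hne : A.Nonempty) (hA : (nb G A).card = A.card)
    (hU : nb G A ≠ Finset.univ) (hcl : (A ∩ nb G A).Nonempty → A ⊆ nb G A) : False := by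
  have hB := nb_bip G hk hreg A hA
  have hAB : A ∪ nb G A = Finset.univ := by
    apply closed_univ G hconn (hne.mono Finset.subset_union_left)
    intro u hu v huv
    rcases Finset.mem_union.1 hu with h | h
    · exact Finset.mem_union_right _ ((mem_nb G).2 ⟨u, h, huv⟩)
    · apply Finset.mem_union_left
      rw [← hB]
      exact (mem_nb G).2 ⟨u, h, huv⟩
  by_cases hi : (A ∩ nb G A).Nonempty
  · apply hU
    rw [Finset.union_eq_right.2 (hcl hi)] at hAB
    exact hAB
  · rw [Finset.not_nonempty_iff_eq_empty] at hi
    apply hnb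
    have hd : ∀ u, u ∈ A → u ∉ nb G A := by
      intro u h1 h2
      have : u ∈ A ∩ nb G A := Finset.mem_inter.2 ⟨h1, h2⟩
      rw [hi] at this
      simp at this
    have key : ∀ u v, G.Adj u v → u ∈ A → v ∉ A := by
      intro u v huv hu hv
      exact hd v hv ((mem_nb G).2 ⟨u, hu, huv⟩)
    have key2 : ∀ u v, G.Adj u v → u ∉ A → v ∈ A := by
      intro u v huv hu
      rw [← hB]
      refine (mem_nb G).2 ⟨u, ?_, huv⟩
      have : u ∈ A ∪ nb G A := by rw [hAB]; simp
      simpa [hu] using this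
    refine ⟨SimpleGraph.Coloring.mk (fun v => if v ∈ A then (0 : Fin 2) else 1) ?_⟩
    intro u v huv
    by_cases hu : u ∈ A
    · simp [hu, key u v huv hu]
    · simp [hu, key2 u v huv hu]

lemma nb_three (hconn : G.Connected) (hnb : ¬ G.Colorable 2) (heven : Even (Fintype.card V))
    (blk : V → Finset V)
    (h1 : ∀ v, v ∈ blk v) (h2 : ∀ u v, u ∈ blk v → blk u = blk v) (h3 : ∀ v, (blk v).card = 3)
    (h4 : ∀ v, (nb G (blk v)).card = 6 ∧ nb G (blk v) ≠ Finset.univ)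
    (h7 : ∀ v, ∀ u ∈ nb G (blk v), blk u ⊆ nb G (blk v))
    (h8 : ∀ u v, ∃ φ : G ≃g G, (blk u).map φ.toEquiv.toEmbedding = blk v) : False := by
  classical
  by_cases hloop : ∃ v, (blk v ∩ nb G (blk v)).Nonempty
  · obtain ⟨v0, hv0⟩ := hloop
    have hall : ∀ v, blk v ⊆ nb G (blk v) := by
      intro v
      obtain ⟨φ, hφ⟩ := h8 v0 v
      obtain ⟨x, hx⟩ := hv0
      rw [Finset.mem_inter] at hx
      have hb : φ x ∈ blk v := by
        rw [← hφ]; exact Finset.mem_map_of_mem _ hx.1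
      have hb2 : φ x ∈ nb G (blk v) := by
        rw [← hφ, nb_map]; exact Finset.mem_map_of_mem _ hx.2
      rw [← h2 _ _ hb]
      rw [← h2 _ _ hb] at hb2
      exact h7 _ _ hb2
    have hD : (nb G (blk v0) \ blk v0).card = 3 := by
      rw [Finset.card_sdiff_of_subset (hall v0), h3, (h4 v0).1]
    obtain ⟨w, hw⟩ : (nb G (blk v0) \ blk v0).Nonempty := by
      rw [← Finset.card_pos]; omega
    rw [Finset.mem_sdiff] at hw
    have hDw : blk w = nb G (blk v0) \ blk v0 := by
      apply Finset.eq_of_subset_of_card_le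
      · intro x hx
        rw [Finset.mem_sdiff]
        refine ⟨h7 _ _ hw.1 hx, fun hx2 => hw.2 ?_⟩
        rw [← h2 _ _ hx2, h2 _ _ hx]
        exact h1 w
      · rw [hD, h3]
    have hvw : blk v0 ⊆ nb G (blk w) := by
      obtain ⟨u, hu, huw⟩ := (mem_nb G).1 hw.1
      have : u ∈ nb G (blk w) := (mem_nb G).2 ⟨w, h1 w, huw.symm⟩
      have := h7 _ _ this
      rwa [h2 _ _ hu] at this
    have heq : nb G (blk v0) = nb G (blk w) := by
      apply Finset.eq_of_subset_of_card_le
      · rw [← Finset.union_sdiff_of_subset (hall v0)]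
        apply Finset.union_subset hvw
        rw [← hDw]
        exact hall w
      · rw [(h4 _).1, (h4 _).1]
    apply (h4 v0).2
    apply closed_univ G hconn ⟨w, hw.1⟩
    intro u hu v huv
    by_cases hu2 : u ∈ blk v0
    · exact (mem_nb G).2 ⟨u, hu2, huv⟩
    · rw [heq]
      refine (mem_nb G).2 ⟨u, ?_, huv⟩
      rw [hDw, Finset.mem_sdiff]
      exact ⟨hu, hu2⟩
  · push Not at hloop
    have hno : ∀ u v, G.Adj u v → blk u ≠ blk v := by
      intro u v huv h
      have : v ∈ blk u ∩ nb G (blk u) :=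
        Finset.mem_inter.2 ⟨h ▸ h1 v, (mem_nb G).2 ⟨u, h1 u, huv⟩⟩
      rw [hloop u] at this
      simp at this
    let β := {B : Finset V // B ∈ Finset.univ.image blk}
    let f : V → β := fun v => ⟨blk v, Finset.mem_image_of_mem _ (Finset.mem_univ v)⟩
    have hf : Function.Surjective f := by
      rintro ⟨B, hB⟩
      obtain ⟨v, _, rfl⟩ := Finset.mem_image.1 hB
      exact ⟨v, rfl⟩
    let Q : SimpleGraph β :=
      { Adj := fun B B' => ∃ u v, f u = B ∧ f v = B' ∧ G.Adj u v
        symm := ⟨by rintro B B' ⟨u, v, h, h', huv⟩; exact ⟨v, u, h', h, huv.symm⟩⟩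
        loopless := ⟨by
          rintro B ⟨u, v, h, h', huv⟩
          exact hno u v huv (congrArg Subtype.val (h.trans h'.symm))⟩ }
    let F : G →g Q := ⟨f, fun {u v} huv => ⟨u, v, rfl, rfl, huv⟩⟩
    have hQc : Q.Connected := by
      have : Nonempty β := hconn.nonempty.map f
      refine ⟨fun B B' => ?_⟩
      obtain ⟨u, rfl⟩ := hf B
      obtain ⟨v, rfl⟩ := hf B'
      exact (hconn.preconnected u v).map F
    have hfe : ∀ u v, f u = f v ↔ blk u = blk v := fun u v => Subtype.ext_iff
    have hfib : ∀ S : Finset V, (∀ v ∈ S, blk v ⊆ S) → S.card = 3 * (S.image f).card := by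
      intro S hS
      rw [Finset.card_eq_sum_card_image f S]
      rw [Finset.sum_const_nat (m := 3)]
      · ring
      · intro B hB
        obtain ⟨v, hv, rfl⟩ := Finset.mem_image.1 hB
        rw [← h3 v]
        congr 1
        ext u
        simp only [Finset.mem_filter, hfe]
        constructor
        · rintro ⟨_, h⟩
          rw [← h]; exact h1 u
        · intro h
          exact ⟨hS v hv h, h2 u v h⟩
    have hcardb : Even (Fintype.card β) := by
      have := hfib Finset.univ (fun _ _ => Finset.subset_univ _)
      rw [Finset.image_univ_of_surjective hf, Finset.card_univ, Finset.card_univ] at this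
      rw [this] at heven
      rcases Nat.even_mul.1 heven with h | h
      · exact absurd h (by decide)
      · exact h
    have hdeg : ∀ B, (Q.neighborSet B).ncard = 2 := by
      intro B
      obtain ⟨v, rfl⟩ := hf B
      have : Q.neighborSet (f v) = ((nb G (blk v)).image f : Finset β) := by
        ext B'
        simp only [SimpleGraph.mem_neighborSet, Finset.coe_image, Set.mem_image, Finset.mem_coe,
          mem_nb]
        constructor
        · rintro ⟨x, y, hx, hy, hxy⟩
          exact ⟨y, ⟨x, ((hfe x v).1 hx) ▸ h1 x, hxy⟩, hy⟩
        · rintro ⟨y, ⟨x, hx, hxy⟩, hy⟩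
          exact ⟨x, y, Subtype.ext (h2 x v hx), hy, hxy⟩
      rw [this, Set.ncard_coe_finset]
      have := hfib (nb G (blk v)) (h7 v)
      rw [(h4 v).1] at this
      omega
    have := colorable_of_two_regular_even Q hQc hdeg hcardb
    exact hnb (this.of_hom F)

lemma nb_main {k : ℕ} (hconn : G.Connected) (hvt : VertexTransitive G) (hnb : ¬ G.Colorable 2)
    (heven : Even (Fintype.card V)) (hreg : G.IsRegularOfDegree k) (hk : 5 ≤ k) :
    (∀ S : Finset V, S.Nonempty → nb G S ≠ Finset.univ → S.card + 4 ≤ (nb G S).card) ∧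
    (6 ≤ k → ∀ S : Finset V, S.Nonempty → nb G S ≠ Finset.univ → (nb G S).card ≤ S.card + 4 →
      S.card + 8 ≤ Fintype.card V → Even S.card) := by
  obtain ⟨a, h0, blk, ha, h1, h2, h3, h4, h5, h6, h7, h8⟩ :=
    nb_setup G hconn.nonempty hvt hreg (by omega : 0 < k)
  obtain ⟨v0⟩ := hconn.nonempty
  have hdv : a ∣ h0 := by
    have := card_dvd_of_closed blk h1 h2 a h3 (nb G (blk v0)) (h7 v0)
    rw [(h4 v0).1] at this
    exact (Nat.dvd_add_right (dvd_refl a)).1 this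
  have hkk : k ≤ a + h0 := by
    rw [← (h4 v0).1, ← hreg v0, ← G.card_neighborFinset_eq_degree]
    apply Finset.card_le_card
    intro x hx
    rw [SimpleGraph.mem_neighborFinset] at hx
    exact (mem_nb G).2 ⟨v0, h1 v0, hx⟩
  have h04 : 4 ≤ h0 := by
    by_contra hlt
    by_cases hz : h0 = 0
    · refine nb_h0_zero G (by omega) hconn hnb hreg (blk v0) ⟨v0, h1 v0⟩ ?_ (h4 v0).2 ?_
      · rw [(h4 v0).1, h3, hz]; rfl
      · rintro ⟨x, hx⟩
        rw [Finset.mem_inter] at hx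
        have := h7 _ _ hx.2
        rwa [h2 _ _ hx.1] at this
    · have hle := Nat.le_of_dvd (by omega) hdv
      have : a = 3 ∧ h0 = 3 := by
        have : h0 < 4 := by omega
        have : a < 4 := by omega
        interval_cases h0 <;> interval_cases a <;> omega
      obtain ⟨rfl, rfl⟩ := this
      exact nb_three G hconn hnb heven blk h1 h2 h3 h4 h7 h8
  constructor
  · intro S hS hU
    have := h5 S hS hU
    omega
  · intro hk6 S hS hU hle hn
    have h5' := h5 S hS hU
    have : h0 = 4 := by omega
    subst this
    have hle4 := Nat.le_of_dvd (by omega) hdv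
    have hcl := h6 S hS hU hle (by omega)
    have hd := card_dvd_of_closed blk h1 h2 a h3 S hcl
    have : 2 ∣ a := by
      interval_cases a <;> omega
    exact even_iff_two_dvd.2 (this.trans hd)

end NbMain

end TwoExt

namespace TwoExt

section Cuts

variable {V : Type*} [Fintype V] [DecidableEq V] (G : SimpleGraph V) [DecidableRel G.Adj]

lemma map_compl' (φ : G ≃g G) (S : Finset V) :
    (S.map φ.toEquiv.toEmbedding)ᶜ = Sᶜ.map φ.toEquiv.toEmbedding := by
  ext v
  simp [Finset.mem_map_equiv]

lemma ec_singleton (v : V) (T : Finset V) : ec G {v} T = (T.filter (G.Adj v)).card := by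
  unfold ec
  rw [Finset.sum_singleton, Finset.sum_boole]
  rfl

lemma ec_sum_left (S T : Finset V) : ec G S T = ∑ v ∈ S, ec G {v} T := by
  simp [ec]

lemma cut_block {k : ℕ} (hreg : G.IsRegularOfDegree k)
    (A : Finset V) (hA2 : 2 ≤ A.card) (hAn : A.card + 2 ≤ Fintype.card V) (hAb : bd G A < 2 * k - 2)
    (hmin : ∀ Z : Finset V, 2 ≤ Z.card → Z.card + 2 ≤ Fintype.card V → bd G A ≤ bd G Z)
    (hmin2 : ∀ Z : Finset V, 2 ≤ Z.card → Z.card + 2 ≤ Fintype.card V → bd G Z ≤ bd G A →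
      A.card ≤ Z.card) (φ : G ≃g G) (hne : (A.map φ.toEquiv.toEmbedding ∩ A).Nonempty) :
    A.map φ.toEquiv.toEmbedding = A := by
  have h3 : 3 ≤ A.card := by
    by_contra h
    have h2 : A.card = 2 := by omega
    have := bd_lower G hreg A
    rw [h2] at this
    omega
  have hhalf : 2 * A.card ≤ Fintype.card V := by
    have hc := Finset.card_add_card_compl A
    have := hmin2 Aᶜ (by omega) (by omega) (bd_compl G A).le
    omega
  set A' := A.map φ.toEquiv.toEmbedding with hA'
  have hc' : A'.card = A.card := Finset.card_map _
  have hb' : bd G A' = bd G A := bd_map G φ A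
  by_contra hneq
  have hs1 : 1 ≤ (A' ∩ A).card := Finset.card_pos.2 hne
  have hs2 : (A' ∩ A).card < A.card := by
    by_contra hge
    have h1 := Finset.eq_of_subset_of_card_le (Finset.inter_subset_right : A' ∩ A ⊆ A) (by omega)
    have h2 : A ⊆ A' := by
      rw [← h1]; exact Finset.inter_subset_left
    exact hneq (Finset.eq_of_subset_of_card_le h2 (by omega)).symm
  have hu := Finset.card_union_add_card_inter A' A
  by_cases hs : 2 ≤ (A' ∩ A).card
  · have e1 := hmin (A' ∩ A) hs (by omega)
    have e2 := hmin (A' ∪ A) (by omega) (by omega)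
    have e3 := bd_submod G A' A
    have := hmin2 (A' ∩ A) hs (by omega) (by omega)
    omega
  · have c1 := Finset.card_sdiff_add_card_inter A' A
    have c2 := Finset.card_sdiff_add_card_inter A A'
    rw [Finset.inter_comm] at c2
    have e1 := hmin (A' \ A) (by omega) (by omega)
    have e2 := hmin (A \ A') (by omega) (by omega)
    have e3 := bd_posimod G A' A
    have := hmin2 (A' \ A) (by omega) (by omega) (by omega)
    omega

lemma cut_dichotomy {k : ℕ} (hconn : G.Connected) (hvt : VertexTransitive G)
    (hreg : G.IsRegularOfDegree k) (hk : 5 ≤ k) :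
    (∀ Z : Finset V, 2 ≤ Z.card → Z.card + 2 ≤ Fintype.card V → 2 * k - 2 ≤ bd G Z) ∨
    ∃ (blk : V → Finset V) (o : V → V) (m : ℕ), k ≤ m ∧ m ≤ 2 * k - 3 ∧
      (∀ v, v ∈ blk v) ∧ (∀ u v, u ∈ blk v → blk u = blk v) ∧ (∀ v, (blk v).card = m) ∧
      (∀ v w, G.Adj v w → w ∉ blk v → w = o v) ∧ (∀ v, G.Adj v (o v)) ∧ (∀ v, o v ∉ blk v) ∧
      (∀ Z : Finset V, Z.Nonempty → Z ≠ Finset.univ → k ≤ bd G Z) := by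
  by_cases hall : ∀ Z : Finset V, 2 ≤ Z.card → Z.card + 2 ≤ Fintype.card V → 2 * k - 2 ≤ bd G Z
  · exact Or.inl hall
  right
  push Not at hall
  obtain ⟨Z0, hZ1, hZ2, hZ3⟩ := hall
  obtain ⟨A, hA, hm1, hm2⟩ := exists_lex_min
    (Finset.univ.filter fun Z : Finset V => 2 ≤ Z.card ∧ Z.card + 2 ≤ Fintype.card V)
    ⟨Z0, by simp [hZ1, hZ2]⟩ (fun Z => (bd G Z : ℤ)) Finset.card
  simp only [Finset.mem_filter, Finset.mem_univ, true_and, Nat.cast_le, and_imp] at hA hm1 hm2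
  have hAb : bd G A < 2 * k - 2 := lt_of_le_of_lt (hm1 Z0 hZ1 hZ2) hZ3
  have hblock := cut_block G hreg A hA.1 hA.2 hAb hm1 hm2
  have hAne : A.Nonempty := Finset.card_pos.1 (by omega)
  obtain ⟨u0, hu0⟩ := hAne
  have hout : ∀ v ∈ A, ec G {v} Aᶜ = ec G {u0} Aᶜ := by
    intro v hv
    obtain ⟨φ, hφ⟩ := hvt u0 v
    have hφA := hblock φ ⟨v, Finset.mem_inter.2
      ⟨Finset.mem_map.2 ⟨u0, hu0, hφ⟩, hv⟩⟩
    have h1 := ec_map G φ {u0} Aᶜ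
    rw [← map_compl', hφA, Finset.map_singleton] at h1
    have h2 : φ.toEquiv.toEmbedding u0 = v := hφ
    rw [h2] at h1
    exact h1
  obtain ⟨r, hr⟩ : ∃ r, ec G {u0} Aᶜ = r := ⟨_, rfl⟩
  have hbd : bd G A = A.card * r := by
    unfold bd
    rw [ec_sum_left, Finset.sum_congr rfl hout, hr]
    simp
  have hpos : 0 < bd G A := bd_pos G hconn ⟨u0, hu0⟩ (by
    rintro rfl
    rw [Finset.card_univ] at hA; omega)
  have hin : k = ec G {u0} A + r := by
    have := ec_split G {u0} A
    rw [ec_univ G hreg, hr] at this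
    simpa using this
  have hin2 : ec G {u0} A + 1 ≤ A.card := by
    rw [ec_singleton]
    have : A.filter (G.Adj u0) ⊆ A.erase u0 := by
      intro x hx
      rw [Finset.mem_filter] at hx
      exact Finset.mem_erase.2 ⟨hx.2.ne', hx.1⟩
    have := Finset.card_le_card this
    rw [Finset.card_erase_of_mem hu0] at this
    omega
  have h3 : 3 ≤ A.card := by
    by_contra h
    have h2 : A.card = 2 := by omega
    have := bd_lower G hreg A
    rw [h2] at this
    omega
  have hr1 : r = 1 := by
    have hr0 : r ≠ 0 := by rintro rfl; omega
    by_contra hr1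
    have hr2 : 2 ≤ r := by omega
    have hlt : A.card * r < 2 * k - 2 := hbd ▸ hAb
    rcases Nat.lt_or_ge r k with hrk | hrk
    · obtain ⟨s, rfl⟩ := Nat.exists_eq_add_of_le hr2
      obtain ⟨t, rfl⟩ := Nat.exists_eq_add_of_lt hrk
      have hc : t + 2 ≤ A.card := by omega
      have := Nat.mul_le_mul_right (2 + s) hc
      have e : (t + 2) * (2 + s) = t * s + 2 * t + 2 * s + 4 := by ring
      have := Nat.zero_le (t * s)
      omega
    · have : r = k := by omega
      subst this
      have := Nat.mul_le_mul_right r h3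
      omega
  subst hr1
  obtain ⟨blk, hb1, hb2, hb3⟩ := exists_blocks G hvt A ⟨u0, hu0⟩ hblock
  have hone : ∀ v, ∃ w, (blk v)ᶜ.filter (G.Adj v) = {w} := by
    intro v
    rw [← Finset.card_eq_one, ← ec_singleton]
    obtain ⟨φ, hφ⟩ := hb3 v
    have hv := hb1 v
    rw [hφ] at hv ⊢
    obtain ⟨u, hu, huv⟩ := Finset.mem_map.1 hv
    rw [map_compl']
    have := ec_map G φ {u} Aᶜ
    rw [Finset.map_singleton, huv, hout u hu, hr] at this
    exact this
  choose o ho using hone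
  have ho' : ∀ v w, (w ∉ blk v ∧ G.Adj v w) ↔ w = o v := by
    intro v w
    have : w ∈ (blk v)ᶜ.filter (G.Adj v) ↔ w ∈ ({o v} : Finset V) := by rw [ho v]
    simpa using this
  refine ⟨blk, o, A.card, by omega, by omega, hb1, hb2, ?_, ?_, ?_, ?_, ?_⟩
  · intro v
    obtain ⟨φ, hφ⟩ := hb3 v
    rw [hφ, Finset.card_map]
  · intro v w h1 h2
    exact (ho' v w).1 ⟨h2, h1⟩
  · intro v
    exact ((ho' v (o v)).2 rfl).2
  · intro v
    exact ((ho' v (o v)).2 rfl).1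
  · intro Z hZ hZu
    have hc := Finset.card_add_card_compl Z
    have hz1 : 1 ≤ Z.card := Finset.card_pos.2 hZ
    have hz2 : 1 ≤ Zᶜ.card := by
      rw [Nat.one_le_iff_ne_zero, Finset.card_ne_zero]
      rw [Finset.nonempty_iff_ne_empty]
      intro h
      exact hZu (Finset.compl_eq_empty_iff _ |>.1 h)
    by_cases hz3 : Z.card = 1
    · have := bd_lower G hreg Z
      rw [hz3] at this; omega
    by_cases hz4 : Zᶜ.card = 1
    · have := bd_lower G hreg Zᶜ
      rw [hz4, bd_compl] at this; omega
    have := hm1 Z (by omega) (by omega)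
    omega

end Cuts

end TwoExt

namespace TwoExt

section Barrier

variable {V : Type*} [Fintype V] [DecidableEq V] (G : SimpleGraph V) [DecidableRel G.Adj]

lemma barrier_of_components {W : Type*} [Fintype W] (H : SimpleGraph W) (f : W → V)
    (hf : Function.Injective f) (heven : Even (Fintype.card V))
    (h4 : Fintype.card W + 4 ≤ Fintype.card V)
    (hodd : Fintype.card V ≤ Fintype.card W + H.oddComponents.ncard + 3) :
    ∃ (lab : V → V) (K : Finset V), (∀ w, lab (f w) ∈ K) ∧
      (∀ x y, H.Adj x y → lab (f x) = lab (f y)) ∧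
      (∀ c ∈ K, Odd ((Finset.univ.filter fun w => lab (f w) = c).card)) ∧
      Fintype.card V ≤ Fintype.card W + K.card + 2 := by
  classical
  have : Fintype H.ConnectedComponent := Fintype.ofFinite _
  have hpar := H.odd_ncard_oddComponents
  rw [Nat.card_eq_fintype_card] at hpar
  have hodd2 : Fintype.card V ≤ Fintype.card W + H.oddComponents.ncard + 2 := by
    have h1 : ∀ a b c : ℕ, (Odd a ↔ Odd b) → Even c → c ≤ b + a + 3 → c ≤ b + a + 2 := by
      intro a b c h1 h2 h3
      by_contra h4
      have : c = b + a + 3 := by omega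
      subst this
      rw [Nat.odd_iff, Nat.odd_iff] at h1
      rw [Nat.even_iff] at h2
      omega
    exact h1 _ _ _ hpar heven hodd
  have hcomp : ∀ d : H.ConnectedComponent,
      (Finset.univ.filter fun w => H.connectedComponentMk w = d).card = d.supp.ncard := by
    intro d
    rw [← Set.ncard_coe_finset]
    congr 1
    ext w
    simp
  obtain ⟨c0, hc0⟩ : H.oddComponents.Nonempty := by
    rw [← Set.ncard_pos]; omega
  have hc0 : Odd c0.supp.ncard := hc0
  let rep : H.ConnectedComponent → V := fun d => f (Quot.out d)
  have hrep : Function.Injective rep := by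
    intro d e h
    have := hf h
    rw [← Quot.out_eq d, ← Quot.out_eq e, this]
  let g : W → H.ConnectedComponent := fun w =>
    if Odd (H.connectedComponentMk w).supp.ncard then H.connectedComponentMk w else c0
  have hg : ∀ w, Odd (g w).supp.ncard := by
    intro w
    simp only [g]
    split_ifs with h
    · exact h
    · exact hc0
  let lab : V → V := Function.extend f (fun w => rep (g w)) id
  have hlab : ∀ w, lab (f w) = rep (g w) := fun w => hf.extend_apply _ _ w
  refine ⟨lab, (Finset.univ.filter fun d : H.ConnectedComponent => Odd d.supp.ncard).image rep,
    ?_, ?_, ?_, ?_⟩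
  · intro w
    rw [hlab]
    exact Finset.mem_image_of_mem _ (by simpa using hg w)
  · intro x y hxy
    rw [hlab, hlab]
    have : H.connectedComponentMk x = H.connectedComponentMk y :=
      SimpleGraph.ConnectedComponent.eq.2 hxy.reachable
    simp only [g, this]
  · intro c hc
    obtain ⟨d, hd, rfl⟩ := Finset.mem_image.1 hc
    have hd : Odd d.supp.ncard := by simpa using hd
    simp only [hlab, hrep.eq_iff]
    by_cases hdc : d = c0
    · subst hdc
      have : (Finset.univ.filter fun w => g w = d) =
          (Finset.univ.filter fun w => H.connectedComponentMk w = d) ∪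
          (Finset.univ.filter fun w => ¬ Odd (H.connectedComponentMk w).supp.ncard) := by
        ext w
        simp only [Finset.mem_filter, Finset.mem_univ, true_and, Finset.mem_union, g]
        split_ifs with h <;> simp [h]
      rw [this, Finset.card_union_of_disjoint]
      · rw [hcomp]
        apply Odd.add_even hd
        rw [Finset.card_eq_sum_card_image H.connectedComponentMk]
        apply Finset.even_sum
        intro e he
        obtain ⟨w, hw, rfl⟩ := Finset.mem_image.1 he
        have hw : ¬ Odd (H.connectedComponentMk w).supp.ncard := by simpa using hw
        rw [Finset.filter_filter]
        have : (Finset.univ.filter fun x => ¬ Odd (H.connectedComponentMk x).supp.ncard ∧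
            H.connectedComponentMk x = H.connectedComponentMk w) =
            Finset.univ.filter fun x => H.connectedComponentMk x = H.connectedComponentMk w := by
          ext x
          simp only [Finset.mem_filter, Finset.mem_univ, true_and, and_iff_right_iff_imp]
          intro h
          rw [h]; exact hw
        rw [this, hcomp]
        exact Nat.not_odd_iff_even.1 hw
      · rw [Finset.disjoint_filter]
        intro w _ h
        rw [h]
        exact not_not.2 hd
    · have : (Finset.univ.filter fun w => g w = d) =
          (Finset.univ.filter fun w => H.connectedComponentMk w = d) := by
        ext w
        simp only [Finset.mem_filter, Finset.mem_univ, true_and, g]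
        split_ifs with h
        · rfl
        · constructor
          · intro h'; exact absurd h'.symm hdc
          · intro h'; rw [h'] at h; exact absurd hd h
      rw [this, hcomp]
      exact hd
  · rw [Finset.card_image_of_injective _ hrep]
    have : H.oddComponents.ncard =
        (Finset.univ.filter fun d : H.ConnectedComponent => Odd d.supp.ncard).card := by
      rw [← Set.ncard_coe_finset]
      congr 1
      ext d
      simp
    omega

/-- the part with label `c` -/
def part (X : Finset V) (lab : V → V) (c : V) : Finset V :=
  Finset.univ.filter fun v => v ∉ X ∧ lab v = c

structure Barrier (X : Finset V) (lab : V → V) (K : Finset V) : Prop where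
  four : 4 ≤ X.card
  ecX : 4 ≤ ec G X X
  mem : ∀ v, v ∉ X → lab v ∈ K
  adj : ∀ u v, u ∉ X → v ∉ X → G.Adj u v → lab u = lab v
  odd : ∀ c ∈ K, Odd (part X lab c).card
  le : X.card ≤ K.card + 2

lemma verts_of_matching {M : G.Subgraph} (hM : M.IsMatching) (h2 : M.edgeSet.ncard = 2) :
    ∃ a b c d : V, a ≠ b ∧ a ≠ c ∧ a ≠ d ∧ b ≠ c ∧ b ≠ d ∧ c ≠ d ∧ G.Adj a b ∧ G.Adj c d ∧
      M.verts = {a, b, c, d} := by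
  obtain ⟨e1, e2, hne, he⟩ := Set.ncard_eq_two.1 h2
  induction e1 using Sym2.ind with | _ a b => ?_
  induction e2 using Sym2.ind with | _ c d => ?_
  have hab : M.Adj a b := by
    rw [← SimpleGraph.Subgraph.mem_edgeSet, he]; simp
  have hcd : M.Adj c d := by
    rw [← SimpleGraph.Subgraph.mem_edgeSet, he]; simp
  refine ⟨a, b, c, d, hab.ne, ?_, ?_, ?_, ?_, hcd.ne, M.adj_sub hab, M.adj_sub hcd, ?_⟩
  · rintro rfl
    exact hne (by rw [hM.eq_of_adj_left hab hcd])
  · rintro rfl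
    exact hne (by rw [hM.eq_of_adj_left hab hcd.symm, Sym2.eq_swap])
  · rintro rfl
    exact hne (by rw [hM.eq_of_adj_left hab.symm hcd, Sym2.eq_swap])
  · rintro rfl
    exact hne (by rw [hM.eq_of_adj_left hab.symm hcd.symm])
  · ext v
    constructor
    · intro hv
      obtain ⟨w, hw, _⟩ := hM hv
      have : s(v, w) ∈ M.edgeSet := hw
      rw [he] at this
      simp only [Set.mem_insert_iff, Set.mem_singleton_iff, Sym2.eq_iff] at this ⊢
      tauto
    · rintro (rfl | rfl | rfl | rfl)
      · exact hab.fst_mem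
      · exact hab.snd_mem
      · exact hcd.fst_mem
      · exact hcd.snd_mem

lemma barrier_of_not_ext (heven : Even (Fintype.card V)) {M : G.Subgraph} (hM : M.IsMatching)
    (h2 : M.edgeSet.ncard = 2) (hno : ¬ ∃ P : G.Subgraph, P.IsPerfectMatching ∧ M ≤ P) :
    ∃ (X : Finset V) (lab : V → V) (K : Finset V), Barrier G X lab K := by
  classical
  obtain ⟨a, b, c, d, hab, hac, had, hbc, hbd, hcd, hGab, hGcd, hverts⟩ :=
    verts_of_matching G hM h2
  have hv4 : (M.vertsᶜ : Set V).ncard + 4 = Fintype.card V := by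
    have h1 := Set.ncard_add_ncard_compl M.verts
    have h3 : M.verts.ncard = 4 := by
      have : M.verts = (({a, b, c, d} : Finset V) : Set V) := by rw [hverts]; simp
      rw [this, Set.ncard_coe_finset]
      simp [hab, hac, had, hbc, hbd, hcd]
    rw [Nat.card_eq_fintype_card] at h1
    omega
  have hnp : ¬ ∃ P : (G.induce (M.vertsᶜ : Set V)).Subgraph, P.IsPerfectMatching := by
    rintro ⟨P, hP⟩
    apply hno
    let f : G.induce (M.vertsᶜ : Set V) →g G := (SimpleGraph.Embedding.induce _).toHom
    have hfi : Function.Injective f := Subtype.val_injective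
    have hP' : (P.map f).IsMatching := hP.1.map f hfi
    refine ⟨M ⊔ P.map f, ⟨hM.sup hP' ?_, ?_⟩, le_sup_left⟩
    · rw [hM.support_eq_verts, hP'.support_eq_verts, Set.disjoint_left]
      rintro v hv ⟨w, _, rfl⟩
      exact w.2 hv
    · intro v
      by_cases hv : v ∈ M.verts
      · exact Or.inl hv
      · exact Or.inr ⟨⟨v, hv⟩, hP.2 _, rfl⟩
  rw [SimpleGraph.tutte] at hnp
  push Not at hnp
  obtain ⟨u, hu⟩ := hnp
  unfold SimpleGraph.IsTutteViolator at hu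
  set D := ((⊤ : (G.induce (M.vertsᶜ : Set V)).Subgraph).deleteVerts u) with hD
  have : Fintype D.verts := Fintype.ofFinite _
  let f : D.verts → V := fun w => w.1.1
  have hf : Function.Injective f := Subtype.val_injective.comp Subtype.val_injective
  have hDv : D.verts = uᶜ := by
    rw [hD]; simp [Set.compl_eq_univ_sdiff]
  have hcW : Fintype.card D.verts + u.ncard + 4 = Fintype.card V := by
    have h1 := Set.ncard_add_ncard_compl u
    rw [← hDv, Nat.card_coe_set_eq] at h1
    rw [← Nat.card_eq_fintype_card, Nat.card_coe_set_eq]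
    omega
  obtain ⟨lab, K, l1, l2, l3, l4⟩ := barrier_of_components D.coe f hf heven (by omega) (by omega)
  have hXc : (Finset.univ.image f)ᶜ.card = u.ncard + 4 := by
    have := Finset.card_add_card_compl (Finset.univ.image f)
    rw [Finset.card_image_of_injective _ hf, Finset.card_univ] at this
    omega
  have hXm : ∀ v, v ∉ (Finset.univ.image f)ᶜ → ∃ w, f w = v := by
    intro v hv
    simpa using hv
  have hMX : ∀ v ∈ M.verts, v ∈ (Finset.univ.image f)ᶜ := by
    intro v hv
    simp only [Finset.mem_compl, Finset.mem_image, Finset.mem_univ, true_and, not_exists]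
    rintro w rfl
    exact w.1.2 hv
  refine ⟨(Finset.univ.image f)ᶜ, lab, K, ⟨by omega, ?_, ?_, ?_, ?_, by omega⟩⟩
  · have hsub : ({a, b, c, d} : Finset V) ⊆ (Finset.univ.image f)ᶜ := by
      intro v hv
      apply hMX
      rw [hverts]
      simpa using hv
    refine le_trans ?_ (ec_mono G hsub hsub)
    have e1 : ec G ({a, b, c, d} : Finset V) {a, b, c, d} =
        ec G {a} {a, b, c, d} + ec G {b} {a, b, c, d} + ec G {c} {a, b, c, d} +
          ec G {d} {a, b, c, d} := by
      rw [ec_sum_left]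
      rw [Finset.sum_insert, Finset.sum_insert, Finset.sum_insert, Finset.sum_singleton]
      · ring
      all_goals simp [hab, hac, had, hbc, hbd, hcd]
    have e2 : ∀ x y : V, G.Adj x y → y ∈ ({a, b, c, d} : Finset V) →
        1 ≤ ec G {x} {a, b, c, d} := by
      intro x y hxy hy
      rw [ec_singleton]
      exact Finset.card_pos.2 ⟨y, Finset.mem_filter.2 ⟨hy, hxy⟩⟩
    have := e2 a b hGab (by simp)
    have := e2 b a hGab.symm (by simp)
    have := e2 c d hGcd (by simp)
    have := e2 d c hGcd.symm (by simp)
    omega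
  · intro v hv
    obtain ⟨w, rfl⟩ := hXm v hv
    exact l1 w
  · intro x y hx hy hxy
    obtain ⟨x, rfl⟩ := hXm x hx
    obtain ⟨y, rfl⟩ := hXm y hy
    apply l2
    have hx2 : x.1 ∉ u := x.2.2
    have hy2 : y.1 ∉ u := y.2.2
    rw [SimpleGraph.Subgraph.coe_adj]
    apply SimpleGraph.Subgraph.deleteVerts_adj.2
    exact ⟨trivial, hx2, trivial, hy2, hxy⟩
  · intro c hc
    have := l3 c hc
    convert this using 1
    rw [← Finset.card_image_of_injective _ hf]
    congr 1
    ext v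
    simp only [part, Finset.mem_filter, Finset.mem_univ, true_and, Finset.mem_image,
      Finset.mem_compl, not_not]
    constructor
    · rintro ⟨⟨w, rfl⟩, h⟩
      exact ⟨w, h, rfl⟩
    · rintro ⟨w, h, rfl⟩
      exact ⟨⟨w, rfl⟩, h⟩

lemma exists_two_matching {k : ℕ} (hcard : 6 ≤ Fintype.card V) (hreg : G.IsRegularOfDegree k)
    (hk : 5 ≤ k) : ∃ M : G.Subgraph, M.IsMatching ∧ M.edgeSet.ncard = 2 := by
  have hnbr : ∀ (v : V) (S : Finset V), S.card ≤ 3 → ∃ w, G.Adj v w ∧ w ∉ S := by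
    intro v S hS
    have : S.card < (G.neighborFinset v).card := by
      rw [G.card_neighborFinset_eq_degree, hreg v]; omega
    obtain ⟨w, hw, hwS⟩ := Finset.exists_mem_notMem_of_card_lt_card this
    exact ⟨w, by simpa using hw, hwS⟩
  obtain ⟨a⟩ : Nonempty V := Fintype.card_pos_iff.1 (by omega)
  obtain ⟨b, hab, _⟩ := hnbr a ∅ (by simp)
  obtain ⟨c, hc⟩ : ∃ c, c ∉ ({a, b} : Finset V) := by
    by_contra h
    push Not at h
    have h1 : ({a, b} : Finset V) = Finset.univ := Finset.eq_univ_iff_forall.2 h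
    have h2 : ({a, b} : Finset V).card ≤ 2 := Finset.card_le_two
    rw [h1, Finset.card_univ] at h2
    omega
  obtain ⟨d, hcd, hd⟩ := hnbr c {a, b} (Finset.card_le_two.trans (by norm_num))
  simp only [Finset.mem_insert, Finset.mem_singleton, not_or] at hc hd
  refine ⟨G.subgraphOfAdj hab ⊔ G.subgraphOfAdj hcd,
    (SimpleGraph.Subgraph.IsMatching.subgraphOfAdj hab).sup
      (SimpleGraph.Subgraph.IsMatching.subgraphOfAdj hcd) ?_, ?_⟩
  · rw [SimpleGraph.support_subgraphOfAdj, SimpleGraph.support_subgraphOfAdj, Set.disjoint_left]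
    simp only [Set.mem_insert_iff, Set.mem_singleton_iff]
    rintro v (rfl | rfl) (h | h)
    · exact hc.1 h.symm
    · exact hd.1 h.symm
    · exact hc.2 h.symm
    · exact hd.2 h.symm
  · rw [SimpleGraph.Subgraph.edgeSet_sup, SimpleGraph.edgeSet_subgraphOfAdj,
      SimpleGraph.edgeSet_subgraphOfAdj, Set.singleton_union, Set.ncard_pair]
    intro h
    rw [Sym2.eq_iff] at h
    rcases h with ⟨h, _⟩ | ⟨h, _⟩
    · exact hc.1 h.symm
    · exact hd.1 h.symm

end Barrier

end TwoExt

namespace TwoExt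

section Contra

variable {V : Type*} [Fintype V] [DecidableEq V] {G : SimpleGraph V} [DecidableRel G.Adj]
  {X : Finset V} {lab : V → V} {K : Finset V}

lemma mem_part {c v : V} : v ∈ part X lab c ↔ v ∉ X ∧ lab v = c := by
  simp [part]

lemma part_disjoint {c d : V} (h : c ≠ d) : Disjoint (part X lab c) (part X lab d) := by
  rw [Finset.disjoint_left]
  intro v hv hv'
  rw [mem_part] at hv hv'
  exact h (hv.2.symm.trans hv'.2)

lemma part_card_union (D : Finset V) :
    (D.biUnion (part X lab)).card = ∑ c ∈ D, (part X lab c).card :=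
  Finset.card_biUnion fun _ _ _ _ h => part_disjoint h

lemma part_compl (hB : Barrier G X lab K) : K.biUnion (part X lab) = Xᶜ := by
  ext v
  simp only [Finset.mem_biUnion, mem_part, Finset.mem_compl]
  constructor
  · rintro ⟨c, _, h, _⟩; exact h
  · intro h; exact ⟨lab v, hB.mem v h, h, rfl⟩

lemma part_total (hB : Barrier G X lab K) :
    X.card + ∑ c ∈ K, (part X lab c).card = Fintype.card V := by
  rw [← part_card_union, part_compl hB, Finset.card_add_card_compl]

lemma part_bd (hB : Barrier G X lab K) (c : V) : bd G (part X lab c) = ec G X (part X lab c) := by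
  unfold bd
  rw [ec_comm G X]
  apply le_antisymm
  · have hd : (part X lab c)ᶜ = X ∪ ((part X lab c)ᶜ \ X) := by
      ext v
      simp only [Finset.mem_compl, Finset.mem_union, Finset.mem_sdiff, mem_part]
      tauto
    rw [hd, ec_union_right G Finset.disjoint_sdiff]
    have : ec G (part X lab c) ((part X lab c)ᶜ \ X) = 0 := by
      rw [ec_eq_zero_iff]
      intro u hu v hv huv
      simp only [Finset.mem_compl, Finset.mem_sdiff, mem_part] at hu hv
      exact hv.1 ⟨hv.2, by rw [← hu.2]; exact (hB.adj u v hu.1 hv.2 huv).symm⟩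
    omega
  · apply ec_mono G subset_rfl
    intro v hv
    simp only [Finset.mem_compl, mem_part]
    tauto

lemma ec_biUnion (S : Finset V) (D : Finset V) :
    ec G S (D.biUnion (part X lab)) = ∑ c ∈ D, ec G S (part X lab c) := by
  rw [ec_comm]
  unfold ec
  rw [Finset.sum_biUnion (fun _ _ _ _ h => part_disjoint h)]
  refine Finset.sum_congr rfl fun c _ => ?_
  exact ec_comm G _ _

lemma part_bd_sum {k : ℕ} (hB : Barrier G X lab K) (hreg : G.IsRegularOfDegree k) :
    ∑ c ∈ K, bd G (part X lab c) + ec G X X = k * X.card := by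
  rw [deg_eq G hreg X, Finset.sum_congr rfl fun c _ => part_bd hB c, ← ec_biUnion, part_compl hB,
    add_comm]
  rfl

/-- the nontrivial labels -/
def nontriv (X : Finset V) (lab : V → V) (K : Finset V) : Finset V :=
  K.filter fun c => 3 ≤ (part X lab c).card

/-- the labels of singletons -/
def triv (X : Finset V) (lab : V → V) (K : Finset V) : Finset V :=
  K.filter fun c => ¬ 3 ≤ (part X lab c).card

lemma triv_card (hB : Barrier G X lab K) {c : V} (hc : c ∈ triv X lab K) :
    (part X lab c).card = 1 := by
  simp only [triv, Finset.mem_filter] at hc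
  obtain ⟨r, hr⟩ := hB.odd c hc.1
  omega

lemma triv_add (X : Finset V) (lab : V → V) (K : Finset V) :
    (nontriv X lab K).card + (triv X lab K).card = K.card :=
  Finset.card_filter_add_card_filter_not _

lemma triv_union_card (hB : Barrier G X lab K) :
    ((triv X lab K).biUnion (part X lab)).card = (triv X lab K).card := by
  rw [part_card_union, Finset.sum_congr rfl fun c hc => triv_card hB hc]
  simp

lemma nb_triv (hB : Barrier G X lab K) : nb G ((triv X lab K).biUnion (part X lab)) ⊆ X := by
  intro w hw
  obtain ⟨v, hv, hvw⟩ := (mem_nb G).1 hw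
  obtain ⟨c, hc, hvc⟩ := Finset.mem_biUnion.1 hv
  by_contra hwX
  have h1 := mem_part.1 hvc
  have : w ∈ part X lab c := mem_part.2 ⟨hwX, by
    rw [← h1.2]; exact (hB.adj v w h1.1 hwX hvw).symm⟩
  obtain ⟨z, hz⟩ := Finset.card_eq_one.1 (triv_card hB hc)
  rw [hz, Finset.mem_singleton] at this hvc
  exact hvw.ne (hvc.trans this.symm)

lemma two_nontriv (hB : Barrier G X lab K)
    (hnb : ∀ S : Finset V, S.Nonempty → nb G S ≠ Finset.univ → S.card + 4 ≤ (nb G S).card) :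
    2 ≤ (nontriv X lab K).card := by
  have h1 := triv_add X lab K
  have h2 := hB.le
  have h3 := hB.four
  by_cases hp : (triv X lab K).card = 0
  · omega
  · have hc := triv_union_card hB
    have hne : ((triv X lab K).biUnion (part X lab)).Nonempty := Finset.card_pos.1 (by omega)
    have hsub := nb_triv hB
    have := hnb _ hne (by
      intro h
      rw [h] at hsub
      obtain ⟨v, hv⟩ := hne
      obtain ⟨c, _, hvc⟩ := Finset.mem_biUnion.1 hv
      exact (mem_part.1 hvc).1 (hsub (Finset.mem_univ v)))
    have := Finset.card_le_card hsub
    omega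

lemma contra_normal {k : ℕ} (hB : Barrier G X lab K) (hreg : G.IsRegularOfDegree k) (hk : 5 ≤ k)
    (hnb : ∀ S : Finset V, S.Nonempty → nb G S ≠ Finset.univ → S.card + 4 ≤ (nb G S).card)
    (hnb2 : 6 ≤ k → ∀ S : Finset V, S.Nonempty → nb G S ≠ Finset.univ →
      (nb G S).card ≤ S.card + 4 → S.card + 8 ≤ Fintype.card V → Even S.card)
    (hcut : ∀ Z : Finset V, 2 ≤ Z.card → Z.card + 2 ≤ Fintype.card V → 2 * k - 2 ≤ bd G Z) :
    False := by
  have ht := two_nontriv hB hnb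
  have hpt := triv_add X lab K
  have hle := hB.le
  have hx4 := hB.four
  have hec := hB.ecX
  have hsum := part_bd_sum hB hreg
  have htot := part_total hB
  have hsplit : ∀ f : V → ℕ, ∑ c ∈ K, f c = ∑ c ∈ nontriv X lab K, f c + ∑ c ∈ triv X lab K, f c :=
    fun f => (Finset.sum_filter_add_sum_filter_not K _ f).symm
  have hn3 : ∀ c ∈ nontriv X lab K, 3 ≤ (part X lab c).card := by
    intro c hc
    exact (Finset.mem_filter.1 hc).2
  have hnK : ∀ c ∈ nontriv X lab K, c ∈ K := by
    intro c hc
    exact (Finset.mem_filter.1 hc).1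
  have hlow : ∀ c ∈ nontriv X lab K, 2 * k - 2 ≤ bd G (part X lab c) := by
    intro c hc
    apply hcut
    · have := hn3 c hc; omega
    · have : (part X lab c).card ≤ ∑ c ∈ K, (part X lab c).card :=
        Finset.single_le_sum (f := fun c => (part X lab c).card) (fun _ _ => Nat.zero_le _)
          (hnK c hc)
      omega
  have hlow1 : (triv X lab K).card * k ≤ ∑ c ∈ triv X lab K, bd G (part X lab c) := by
    rw [← smul_eq_mul]
    apply Finset.card_nsmul_le_sum
    intro c hc
    have := bd_lower G hreg (part X lab c)
    rw [triv_card hB hc] at this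
    omega
  have hlow2 : (nontriv X lab K).card * (2 * k - 2) ≤
      ∑ c ∈ nontriv X lab K, bd G (part X lab c) := by
    rw [← smul_eq_mul]
    apply Finset.card_nsmul_le_sum
    exact hlow
  have hs := hsplit fun c => bd G (part X lab c)
  have htt := hsplit fun c => (part X lab c).card
  have htc : ∑ c ∈ triv X lab K, (part X lab c).card = (triv X lab K).card := by
    rw [← part_card_union, triv_union_card hB]
  have hcard2 : (nontriv X lab K).card = 2 := by
    by_contra hne
    obtain ⟨j, rfl⟩ := Nat.exists_eq_add_of_le hk
    have e1 : 2 * (5 + j) - 2 = 8 + 2 * j := by omega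
    rw [e1] at hlow2
    have hx : (5 + j) * X.card ≤
        (5 + j) * ((nontriv X lab K).card + (triv X lab K).card + 2) :=
      Nat.mul_le_mul_left _ (by omega)
    have h3 : 3 ≤ (nontriv X lab K).card := by omega
    have h3' : 3 * (3 + j) ≤ (nontriv X lab K).card * (3 + j) := Nat.mul_le_mul_right _ h3
    nlinarith
  obtain ⟨c1, c2, hc12, hc⟩ := Finset.card_eq_two.1 hcard2
  have hc1 : c1 ∈ nontriv X lab K := by rw [hc]; simp
  have hc2 : c2 ∈ nontriv X lab K := by rw [hc]; simp
  rw [hc, Finset.sum_pair hc12] at hs htt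
  have hx : X.card ≤ (triv X lab K).card + 4 := by omega
  have hb1 : bd G (part X lab c1) = 2 * k - 2 := by
    have h1 := hlow c1 hc1
    have h2 := hlow c2 hc2
    have h3 : k * X.card ≤ k * ((triv X lab K).card + 4) := Nat.mul_le_mul_left _ hx
    have h4 : k * ((triv X lab K).card + 4) = (triv X lab K).card * k + 4 * k := by ring
    omega
  have hb2 : bd G (part X lab c2) = 2 * k - 2 := by
    have h1 := hlow c1 hc1
    have h2 := hlow c2 hc2
    have h3 : k * X.card ≤ k * ((triv X lab K).card + 4) := Nat.mul_le_mul_left _ hx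
    have h4 : k * ((triv X lab K).card + 4) = (triv X lab K).card * k + 4 * k := by ring
    omega
  have hodd := hB.odd c1 (hnK _ hc1)
  have hodd2 := hB.odd c2 (hnK _ hc2)
  rcases Nat.even_or_odd k with hke | hko
  · have hk6 : 6 ≤ k := by
      rcases hke with ⟨r, hr⟩; omega
    have h5 : ∀ c, Odd (part X lab c).card → 3 ≤ (part X lab c).card →
        bd G (part X lab c) = 2 * k - 2 → 5 ≤ (part X lab c).card := by
      intro c ho h3 hb
      by_contra hlt
      have : (part X lab c).card = 3 := by
        rcases ho with ⟨r, hr⟩; omega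
      have h := bd_lower G hreg (part X lab c)
      rw [this, hb] at h
      omega
    have h51 := h5 c1 hodd (hn3 _ hc1) hb1
    have h52 := h5 c2 hodd2 (hn3 _ hc2) hb2
    have hc1t : c1 ∉ triv X lab K := by
      simp only [triv, Finset.mem_filter, not_and, not_not]
      intro _; exact hn3 _ hc1
    have hc2t : c2 ∉ triv X lab K := by
      simp only [triv, Finset.mem_filter, not_and, not_not]
      intro _; exact hn3 _ hc2
    have hI := triv_union_card hB
    have hsub := nb_triv hB
    set I := (triv X lab K).biUnion (part X lab) with hIdef
    have hdisj : Disjoint I (part X lab c1) := by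
      rw [hIdef, Finset.disjoint_biUnion_left]
      intro c hct
      exact part_disjoint (fun h => hc1t (h ▸ hct))
    have hScard : (I ∪ part X lab c1).card = I.card + (part X lab c1).card :=
      Finset.card_union_of_disjoint hdisj
    have hnbS : nb G (I ∪ part X lab c1) ⊆ X ∪ part X lab c1 := by
      intro w hw
      obtain ⟨v, hv, hvw⟩ := (mem_nb G).1 hw
      rcases Finset.mem_union.1 hv with h | h
      · exact Finset.mem_union_left _ (hsub ((mem_nb G).2 ⟨v, h, hvw⟩))
      · by_cases hwX : w ∈ X
        · exact Finset.mem_union_left _ hwX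
        · have h1 := mem_part.1 h
          exact Finset.mem_union_right _ (mem_part.2 ⟨hwX, by
            rw [← h1.2]; exact (hB.adj v w h1.1 hwX hvw).symm⟩)
    obtain ⟨y, hy⟩ : (part X lab c2).Nonempty := Finset.card_pos.1 (by omega)
    have hyX : y ∉ X ∪ part X lab c1 := by
      rw [Finset.mem_union, not_or]
      refine ⟨(mem_part.1 hy).1, fun h => ?_⟩
      exact hc12 ((mem_part.1 h).2.symm.trans (mem_part.1 hy).2)
    have hcu : (nb G (I ∪ part X lab c1)).card ≤ X.card + (part X lab c1).card :=
      (Finset.card_le_card hnbS).trans (Finset.card_union_le _ _)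
    have hE1 := hnb2 hk6 (I ∪ part X lab c1) (Finset.card_pos.1 (by omega))
      (by intro h; rw [h] at hnbS; exact hyX (hnbS (Finset.mem_univ y)))
      (by omega) (by omega)
    rw [hScard] at hE1
    by_cases hp : I.card = 0
    · rw [hp, zero_add] at hE1
      exact (Nat.not_even_iff_odd.2 hodd) hE1
    · have hcu2 := Finset.card_le_card hsub
      have hE0 := hnb2 hk6 I (Finset.card_pos.1 (by omega))
        (by
          intro h; rw [h] at hsub
          exact hyX (Finset.mem_union_left _ (hsub (Finset.mem_univ y))))
        (by omega) (by omega)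
      exact (Nat.not_even_iff_odd.2 hodd) ((Nat.even_add.1 hE1).1 hE0)
  · have h1 := deg_eq G hreg (part X lab c1)
    have h2 := ec_self_even G (part X lab c1)
    have h3 : Odd (k * (part X lab c1).card) := hko.mul hodd
    rw [h1, hb1] at h3
    have h4 : Even (2 * k - 2) := ⟨k - 1, by omega⟩
    exact (Nat.not_even_iff_odd.2 h3) (h2.add h4)

end Contra

end TwoExt

namespace TwoExt

section Exceptional

variable {V : Type*} [Fintype V] [DecidableEq V] {G : SimpleGraph V} [DecidableRel G.Adj]
  {X : Finset V} {lab : V → V} {K : Finset V} {k m : ℕ} {blk : V → Finset V} {o : V → V}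

structure Exc (G : SimpleGraph V) [DecidableRel G.Adj] (k m : ℕ) (blk : V → Finset V)
    (o : V → V) : Prop where
  km : k ≤ m
  mle : m ≤ 2 * k - 3
  mem : ∀ v, v ∈ blk v
  eq : ∀ u v, u ∈ blk v → blk u = blk v
  card : ∀ v, (blk v).card = m
  uniq : ∀ v w, G.Adj v w → w ∉ blk v → w = o v
  adj : ∀ v, G.Adj v (o v)
  out : ∀ v, o v ∉ blk v
  cut : ∀ Z : Finset V, Z.Nonempty → Z ≠ Finset.univ → k ≤ bd G Z

lemma Exc.invol (hE : Exc G k m blk o) (v : V) : o (o v) = v := by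
  refine (hE.uniq (o v) v (hE.adj v).symm ?_).symm
  intro h
  have := hE.eq _ _ h
  exact hE.out v (this ▸ hE.mem (o v))

lemma Exc.inj (hE : Exc G k m blk o) : Function.Injective o :=
  Function.LeftInverse.injective (g := o) hE.invol

lemma Exc.inner (hE : Exc G k m blk o) (hreg : G.IsRegularOfDegree k) (v : V) :
    ec G {v} (blk v) + 1 = k := by
  have h1 := ec_split G {v} (blk v)
  rw [ec_univ G hreg, ec_singleton G v (blk v)ᶜ] at h1
  have : (blk v)ᶜ.filter (G.Adj v) = {o v} := by
    ext w
    simp only [Finset.mem_filter, Finset.mem_compl, Finset.mem_singleton]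
    constructor
    · rintro ⟨h, h'⟩; exact hE.uniq v w h' h
    · rintro rfl; exact ⟨hE.out v, hE.adj v⟩
  rw [this] at h1
  simpa using h1.symm

lemma Exc.inner_set (hE : Exc G k m blk o) (hreg : G.IsRegularOfDegree k) {B P : Finset V}
    (hB : B ∈ Finset.univ.image blk) (hP : P ⊆ B) : ec G P B = (k - 1) * P.card := by
  obtain ⟨b, _, rfl⟩ := Finset.mem_image.1 hB
  rw [ec_sum_left, Finset.sum_congr rfl (g := fun _ => k - 1)]
  · simp [mul_comm]
  · intro v hv
    have := hE.inner hreg v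
    rw [hE.eq v b (hP hv)] at this
    omega

lemma Exc.din0 (hE : Exc G k m blk o) (hreg : G.IsRegularOfDegree k) (hk : 5 ≤ k) {B P : Finset V}
    (hB : B ∈ Finset.univ.image blk) (hP : P ⊆ B) :
    k * P.card ≤ ec G P (B \ P) + P.card * P.card := by
  have h1 := hE.inner_set hreg hB hP
  have h2 : ec G P B = ec G P P + ec G P (B \ P) := by
    rw [← ec_union_right G Finset.disjoint_sdiff, Finset.union_sdiff_of_subset hP]
  have h3 := ec_self_le G P
  obtain ⟨j, rfl⟩ := Nat.exists_eq_add_of_le hk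
  have h4 : 5 + j - 1 = 4 + j := by omega
  rw [h4] at h1
  nlinarith

lemma Exc.din_both (hE : Exc G k m blk o) (hreg : G.IsRegularOfDegree k) (hk : 5 ≤ k)
    {B P : Finset V} (hB : B ∈ Finset.univ.image blk) (hP : P ⊆ B) :
    ∃ s t D : ℕ, s = P.card ∧ t = (B \ P).card ∧ D = ec G P (B \ P) ∧ s + t = m ∧
      k * s ≤ D + s * s ∧ k * t ≤ D + t * t := by
  refine ⟨_, _, _, rfl, rfl, rfl, ?_, hE.din0 hreg hk hB hP, ?_⟩
  · have := Finset.card_sdiff_add_card_eq_card hP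
    obtain ⟨b, _, rfl⟩ := Finset.mem_image.1 hB
    rw [hE.card b] at this
    omega
  · have := hE.din0 hreg hk hB (Finset.sdiff_subset : B \ P ⊆ B)
    rw [sdiff_sdiff_eq_self hP, ec_comm] at this
    exact this

lemma aux1 {k s D : ℕ} (h1 : 1 ≤ s) (h2 : s + 1 ≤ k) (h : k * s ≤ D + s * s) : k - 1 ≤ D := by
  obtain ⟨j, rfl⟩ := Nat.exists_eq_add_of_le h2
  obtain ⟨i, rfl⟩ := Nat.exists_eq_add_of_le h1
  have : 1 + i + 1 + j - 1 = 1 + i + j := by omega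
  rw [this]
  nlinarith [Nat.zero_le (i * j)]

lemma aux2 {k s D : ℕ} (h1 : 2 ≤ s) (h2 : s + 2 ≤ k) (h : k * s ≤ D + s * s) : 2 * k - 4 ≤ D := by
  obtain ⟨j, rfl⟩ := Nat.exists_eq_add_of_le h2
  obtain ⟨i, rfl⟩ := Nat.exists_eq_add_of_le h1
  have : 2 * (2 + i + 2 + j) - 4 = 2 * i + 2 * j + 4 := by omega
  rw [this]
  nlinarith [Nat.zero_le (i * j)]

lemma Exc.din_low1 (hE : Exc G k m blk o) (hreg : G.IsRegularOfDegree k) (hk : 5 ≤ k)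
    {B P : Finset V} (hB : B ∈ Finset.univ.image blk) (hP : P ⊆ B) (h1 : 1 ≤ P.card)
    (h2 : 1 ≤ (B \ P).card) : k - 1 ≤ ec G P (B \ P) := by
  obtain ⟨s, t, D, hs, ht, hD, hm, e1, e2⟩ := hE.din_both hreg hk hB hP
  have := hE.mle
  rw [← hD]
  by_cases h : s + 1 ≤ k
  · exact aux1 (by omega) h e1
  · exact aux1 (by omega) (by omega) e2

lemma Exc.din_low2 (hE : Exc G k m blk o) (hreg : G.IsRegularOfDegree k) (hk : 5 ≤ k)
    {B P : Finset V} (hB : B ∈ Finset.univ.image blk) (hP : P ⊆ B) (h1 : 2 ≤ P.card)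
    (h2 : 2 ≤ (B \ P).card) : 2 * k - 4 ≤ ec G P (B \ P) := by
  obtain ⟨s, t, D, hs, ht, hD, hm, e1, e2⟩ := hE.din_both hreg hk hB hP
  have := hE.mle
  rw [← hD]
  by_cases h : s + 2 ≤ k
  · exact aux2 (by omega) h e1
  · exact aux2 (by omega) (by omega) e2

lemma Exc.fiber (hE : Exc G k m blk o) {B S : Finset V} (hB : B ∈ Finset.univ.image blk) :
    S.filter (fun v => blk v = B) = B ∩ S := by
  obtain ⟨b, _, rfl⟩ := Finset.mem_image.1 hB
  ext v
  simp only [Finset.mem_filter, Finset.mem_inter]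
  constructor
  · rintro ⟨h, h'⟩; exact ⟨h' ▸ hE.mem v, h⟩
  · rintro ⟨h, h'⟩; exact ⟨h', hE.eq _ _ h⟩

lemma Exc.block_sum (hE : Exc G k m blk o) (S : Finset V) (f : V → ℕ) :
    ∑ v ∈ S, f v = ∑ B ∈ Finset.univ.image blk, ∑ v ∈ B ∩ S, f v := by
  rw [← Finset.sum_fiberwise_of_maps_to (t := Finset.univ.image blk) (g := blk)
    (fun v _ => Finset.mem_image_of_mem _ (Finset.mem_univ v))]
  refine Finset.sum_congr rfl fun B hB => ?_
  rw [hE.fiber hB]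

/-- the pieces -/
def pieces (X : Finset V) (lab : V → V) (K : Finset V) (blk : V → Finset V) :
    Finset (Finset V × V) :=
  ((Finset.univ.image blk) ×ˢ K).filter fun p =>
    (p.1 ∩ part X lab p.2).Nonempty ∧ (p.1 \ part X lab p.2).Nonempty

/-- inner boundary of a piece -/
def din (G : SimpleGraph V) [DecidableRel G.Adj] (X : Finset V) (lab : V → V)
    (p : Finset V × V) : ℕ :=
  ec G (p.1 ∩ part X lab p.2) (p.1 \ part X lab p.2)

lemma sdiff_inter_part (B : Finset V) (c : V) :
    B \ (B ∩ part X lab c) = B \ part X lab c := by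
  ext; simp

lemma din_eq (hB : Barrier G X lab K) (B : Finset V) (c : V) :
    din G X lab (B, c) = ec G (B ∩ X) (B ∩ part X lab c) := by
  unfold din
  rw [ec_comm]
  have : B \ part X lab c = (B ∩ X) ∪ ((B \ part X lab c) \ X) := by
    ext v
    simp only [Finset.mem_sdiff, Finset.mem_union, Finset.mem_inter, mem_part]
    tauto
  rw [this, ec_union_left G]
  · have h0 : ec G ((B \ part X lab c) \ X) (B ∩ part X lab c) = 0 := by
      rw [ec_eq_zero_iff]
      intro u hu v hv huv
      simp only [Finset.mem_sdiff, Finset.mem_inter, mem_part] at hu hv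
      exact hu.1.2 ⟨hu.2, by rw [← hv.2.2]; exact hB.adj u v hu.2 hv.2.1 huv⟩
    rw [h0]; rfl
  · rw [Finset.disjoint_left]
    intro v hv hv'
    simp only [Finset.mem_sdiff, Finset.mem_inter] at hv hv'
    exact hv'.2 hv.2

lemma din_block (hE : Exc G k m blk o) (hB : Barrier G X lab K) (hreg : G.IsRegularOfDegree k)
    {B : Finset V} (hBB : B ∈ Finset.univ.image blk) :
    ∑ c ∈ K, din G X lab (B, c) + ec G (B ∩ X) (B ∩ X) = (k - 1) * (B ∩ X).card := by
  rw [← hE.inner_set hreg hBB (Finset.inter_subset_left : B ∩ X ⊆ B)]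
  have h1 : ec G (B ∩ X) B = ec G (B ∩ X) (B ∩ X) + ec G (B ∩ X) (B \ (B ∩ X)) := by
    rw [← ec_union_right G Finset.disjoint_sdiff,
      Finset.union_sdiff_of_subset Finset.inter_subset_left]
  have h2 : B \ (B ∩ X) = K.biUnion fun c => B ∩ part X lab c := by
    ext v
    simp only [Finset.mem_sdiff, Finset.mem_inter, Finset.mem_biUnion, mem_part]
    constructor
    · rintro ⟨h, h'⟩
      have hv : v ∉ X := fun hx => h' ⟨h, hx⟩
      exact ⟨lab v, hB.mem v hv, h, hv, rfl⟩
    · rintro ⟨c, _, h, h', _⟩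
      exact ⟨h, fun hx => h' hx.2⟩
  rw [h1, h2, add_comm]
  congr 1
  rw [ec_comm]
  unfold ec
  rw [Finset.sum_biUnion]
  · refine Finset.sum_congr rfl fun c _ => ?_
    rw [din_eq hB, ec_comm]
    rfl
  · intro c _ d _ h
    exact (part_disjoint h).mono Finset.inter_subset_right Finset.inter_subset_right

lemma piece_sum (f : Finset V × V → ℕ)
    (hf : ∀ p ∈ (Finset.univ.image blk) ×ˢ K, f p ≠ 0 →
      (p.1 ∩ part X lab p.2).Nonempty ∧ (p.1 \ part X lab p.2).Nonempty) :
    ∑ p ∈ pieces X lab K blk, f p = ∑ B ∈ Finset.univ.image blk, ∑ c ∈ K, f (B, c) := by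
  unfold pieces
  rw [Finset.sum_filter_of_ne hf, Finset.sum_product]

/-- inner edges of X -/
def eiX (G : SimpleGraph V) [DecidableRel G.Adj] (X : Finset V) (blk : V → Finset V) : ℕ :=
  ∑ B ∈ Finset.univ.image blk, ec G (B ∩ X) (B ∩ X)

/-- outer edges of X -/
def eoX (X : Finset V) (o : V → V) : ℕ := (X.filter fun v => o v ∈ X).card

lemma X_blocks (hE : Exc G k m blk o) :
    ∑ B ∈ Finset.univ.image blk, (B ∩ X).card = X.card := by
  have := hE.block_sum X (fun _ => 1)
  simp only [Finset.sum_const, smul_eq_mul, mul_one] at this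
  exact this.symm

lemma din_total (hE : Exc G k m blk o) (hB : Barrier G X lab K) (hreg : G.IsRegularOfDegree k) :
    ∑ p ∈ pieces X lab K blk, din G X lab p + eiX G X blk = (k - 1) * X.card := by
  rw [piece_sum]
  · unfold eiX
    rw [← Finset.sum_add_distrib, ← X_blocks hE, Finset.mul_sum]
    exact Finset.sum_congr rfl fun B hBB => din_block hE hB hreg hBB
  · rintro ⟨B, c⟩ _ h
    constructor
    · by_contra h'
      rw [Finset.not_nonempty_iff_eq_empty] at h'
      apply h
      unfold din
      rw [h']
      simp [ec]
    · by_contra h'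
      rw [Finset.not_nonempty_iff_eq_empty] at h'
      apply h
      unfold din
      rw [h']
      simp [ec]

lemma ei_eo (hE : Exc G k m blk o) : ec G X X ≤ eiX G X blk + eoX X o := by
  rw [ec_sum_left]
  have h1 : ∀ v ∈ X, ec G {v} X ≤ ec G {v} (blk v ∩ X) + if o v ∈ X then 1 else 0 := by
    intro v _
    have : X = (blk v ∩ X) ∪ (X \ blk v) := by
      ext; simp; tauto
    have h2 : ec G {v} X = ec G {v} (blk v ∩ X) + ec G {v} (X \ blk v) := by
      rw [← ec_union_right G, ← this]
      rw [Finset.disjoint_left]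
      intro w hw hw'
      exact (Finset.mem_sdiff.1 hw').2 (Finset.mem_inter.1 hw).1
    rw [h2, ec_singleton G v (X \ blk v)]
    apply Nat.add_le_add_left
    have hsub : (X \ blk v).filter (G.Adj v) ⊆ if o v ∈ X then {o v} else ∅ := by
      intro w hw
      simp only [Finset.mem_filter, Finset.mem_sdiff] at hw
      have := hE.uniq v w hw.2 hw.1.2
      rw [← this, if_pos hw.1.1]
      simp
    refine (Finset.card_le_card hsub).trans ?_
    split_ifs <;> simp
  refine (Finset.sum_le_sum h1).trans ?_
  rw [Finset.sum_add_distrib]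
  apply Nat.add_le_add
  · rw [hE.block_sum]
    unfold eiX
    refine Finset.sum_le_sum fun B hBB => ?_
    rw [ec_sum_left]
    obtain ⟨b, _, rfl⟩ := Finset.mem_image.1 hBB
    refine (Finset.sum_congr rfl fun v hv => ?_).le
    rw [hE.eq v b (Finset.mem_inter.1 hv).1]
  · unfold eoX
    rw [Finset.card_filter]

/-- number of outgoing perfect-matching edges of a part -/
def outc (X : Finset V) (lab : V → V) (o : V → V) (c : V) : ℕ :=
  ((part X lab c).filter fun v => o v ∈ X).card

lemma o_part (hE : Exc G k m blk o) (hB : Barrier G X lab K) {c v : V} (hv : v ∈ part X lab c)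
    (ho : o v ∉ X) : o v ∈ part X lab c := by
  rw [mem_part] at *
  exact ⟨ho, by rw [← hv.2]; exact (hB.adj v (o v) hv.1 ho (hE.adj v)).symm⟩

lemma outc_odd (hE : Exc G k m blk o) (hB : Barrier G X lab K) {c : V} (hc : c ∈ K) :
    Odd (outc X lab o c) := by
  have h1 := Finset.card_filter_add_card_filter_not (s := part X lab c) (fun v => o v ∈ X)
  have h2 : Even ((part X lab c).filter fun v => ¬ o v ∈ X).card := by
    rw [← ZMod.natCast_eq_zero_iff_even, Finset.cast_card]
    refine Finset.sum_involution (fun v _ => o v) ?_ ?_ ?_ ?_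
    · intro v _; decide
    · intro v _ _
      exact (hE.adj v).ne'
    · intro v hv
      rw [Finset.mem_filter] at hv ⊢
      refine ⟨o_part hE hB hv.1 hv.2, ?_⟩
      rw [hE.invol]
      exact (mem_part.1 hv.1).1
    · intro v _
      exact hE.invol v
  have h3 := hB.odd c hc
  rw [← h1] at h3
  unfold outc
  rw [Nat.odd_add] at h3
  exact h3.2 h2

lemma outc_sum (hE : Exc G k m blk o) (hB : Barrier G X lab K) :
    ∑ c ∈ K, outc X lab o c + eoX X o = X.card := by
  have h1 : ∑ c ∈ K, outc X lab o c = (Xᶜ.filter fun v => o v ∈ X).card := by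
    rw [← part_compl hB, Finset.filter_biUnion, Finset.card_biUnion]
    · rfl
    · intro c _ d _ h
      exact (part_disjoint h).mono (Finset.filter_subset _ _) (Finset.filter_subset _ _)
  have h2 : (Xᶜ.filter fun v => o v ∈ X).card = (X.filter fun v => ¬ o v ∈ X).card := by
    refine Finset.card_nbij' o o ?_ ?_ ?_ ?_
    · intro v hv
      simp only [Finset.coe_filter, Finset.mem_compl, Set.mem_ofPred_eq] at hv ⊢
      rw [hE.invol]; exact ⟨hv.2, hv.1⟩
    · intro v hv
      simp only [Finset.coe_filter, Finset.mem_compl, Set.mem_ofPred_eq] at hv ⊢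
      rw [hE.invol]; exact ⟨hv.2, hv.1⟩
    · intro v _; exact hE.invol v
    · intro v _; exact hE.invol v
  rw [h1, h2, eoX, add_comm]
  exact Finset.card_filter_add_card_filter_not _

lemma closed_cut (hE : Exc G k m blk o) {U : Finset V} (hU : ∀ v ∈ U, blk v ⊆ U)
    (hne : U.Nonempty) (hnu : U ≠ Finset.univ) : k ≤ (U.filter fun v => o v ∉ U).card := by
  refine (hE.cut U hne hnu).trans ?_
  unfold bd
  rw [ec_sum_left, Finset.card_filter]
  refine Finset.sum_le_sum fun v hv => ?_
  rw [ec_singleton]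
  have hsub : Uᶜ.filter (G.Adj v) ⊆ if o v ∉ U then {o v} else ∅ := by
    intro w hw
    simp only [Finset.mem_filter, Finset.mem_compl] at hw
    have := hE.uniq v w hw.2 (fun h => hw.1 (hU v hv h))
    rw [← this, if_pos hw.1]
    simp
  refine (Finset.card_le_card hsub).trans ?_
  split_ifs <;> simp

end Exceptional

end TwoExt

namespace TwoExt

section ExceptionalContra

variable {V : Type*} [Fintype V] [DecidableEq V] {G : SimpleGraph V} [DecidableRel G.Adj]
  {X : Finset V} {lab : V → V} {K : Finset V} {k m : ℕ} {blk : V → Finset V} {o : V → V}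

/-- number of pieces of a part -/
def npc (X : Finset V) (lab : V → V) (K : Finset V) (blk : V → Finset V) (c : V) : ℕ :=
  ((pieces X lab K blk).filter fun p => p.2 = c).card

/-- number of pieces in a block -/
def npb (X : Finset V) (lab : V → V) (K : Finset V) (blk : V → Finset V) (B : Finset V) : ℕ :=
  ((pieces X lab K blk).filter fun p => p.1 = B).card

lemma mem_pieces {B : Finset V} {c : V} : (B, c) ∈ pieces X lab K blk ↔
    (B ∈ Finset.univ.image blk ∧ c ∈ K) ∧ (B ∩ part X lab c).Nonempty ∧
      (B \ part X lab c).Nonempty := by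
  unfold pieces
  rw [Finset.mem_filter, Finset.mem_product]

lemma npc_sum : ∑ c ∈ K, npc X lab K blk c = (pieces X lab K blk).card := by
  refine (Finset.card_eq_sum_card_fiberwise (f := Prod.snd) ?_).symm
  rintro ⟨B, c⟩ h
  exact (mem_pieces.1 h).1.2

lemma npb_sum : ∑ B ∈ Finset.univ.image blk, npb X lab K blk B = (pieces X lab K blk).card := by
  refine (Finset.card_eq_sum_card_fiberwise (f := Prod.fst) ?_).symm
  rintro ⟨B, c⟩ h
  exact (mem_pieces.1 h).1.1

lemma piece_low (hE : Exc G k m blk o) (hreg : G.IsRegularOfDegree k) (hk : 5 ≤ k)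
    {p : Finset V × V} (hp : p ∈ pieces X lab K blk) : k - 1 ≤ din G X lab p := by
  obtain ⟨B, c⟩ := p
  obtain ⟨⟨h1, _⟩, h2, h3⟩ := mem_pieces.1 hp
  have := hE.din_low1 hreg hk h1 (Finset.inter_subset_left : B ∩ part X lab c ⊆ B)
    (Finset.card_pos.2 h2) (by rw [sdiff_inter_part]; exact Finset.card_pos.2 h3)
  rw [sdiff_inter_part] at this
  exact this

lemma ps_le (hE : Exc G k m blk o) (hB : Barrier G X lab K) (hreg : G.IsRegularOfDegree k)
    (hk : 5 ≤ k) : (k - 1) * (pieces X lab K blk).card + eiX G X blk ≤ (k - 1) * X.card := by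
  rw [← din_total hE hB hreg]
  have := Finset.card_nsmul_le_sum (pieces X lab K blk) (fun p => din G X lab p) (k - 1)
    (fun p hp => piece_low hE hreg hk hp)
  rw [smul_eq_mul, mul_comm] at this
  omega

lemma npb_le (hE : Exc G k m blk o) (hB : Barrier G X lab K) (hreg : G.IsRegularOfDegree k)
    (hk : 5 ≤ k) {B : Finset V} (hBB : B ∈ Finset.univ.image blk) :
    npb X lab K blk B ≤ (B ∩ X).card := by
  have h1 := din_block hE hB hreg hBB
  have h2 : npb X lab K blk B * (k - 1) ≤ ∑ c ∈ K, din G X lab (B, c) := by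
    have := Finset.card_nsmul_le_sum ((pieces X lab K blk).filter fun p => p.1 = B)
      (din G X lab) (k - 1) (fun p hp => piece_low hE hreg hk (Finset.mem_filter.1 hp).1)
    rw [smul_eq_mul] at this
    refine this.trans ?_
    have h3 : ∑ c ∈ K, din G X lab (B, c) = ∑ p ∈ K.image (fun c => (B, c)), din G X lab p := by
      rw [Finset.sum_image]
      intro a _ b _ h
      exact (Prod.mk.inj h).2
    rw [h3]
    refine Finset.sum_le_sum_of_subset ?_
    rintro ⟨B', c⟩ h
    rw [Finset.mem_filter] at h
    have h4 := (mem_pieces.1 h.1).1.2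
    have h5 : B' = B := h.2
    rw [h5]
    exact Finset.mem_image_of_mem _ h4
  have h6 : npb X lab K blk B * (k - 1) ≤ (B ∩ X).card * (k - 1) := by
    rw [mul_comm (B ∩ X).card]; omega
  exact Nat.le_of_mul_le_mul_right h6 (by omega)

lemma block_excess (hE : Exc G k m blk o) (hB : Barrier G X lab K) (hreg : G.IsRegularOfDegree k)
    (hk : 5 ≤ k) {B : Finset V} (hBB : B ∈ Finset.univ.image blk) :
    (B ∩ X).card + (pieces X lab K blk).card ≤ npb X lab K blk B + X.card := by
  rw [← npb_sum, ← X_blocks hE (X := X), ← Finset.add_sum_erase _ _ hBB,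
    ← Finset.add_sum_erase _ (fun B => (B ∩ X).card) hBB]
  have : ∑ B ∈ (Finset.univ.image blk).erase B, npb X lab K blk B ≤
      ∑ B ∈ (Finset.univ.image blk).erase B, (B ∩ X).card :=
    Finset.sum_le_sum fun B' hB' => npb_le hE hB hreg hk (Finset.mem_of_mem_erase hB')
  omega

lemma X_ne (hB : Barrier G X lab K) : ∃ x, x ∈ X := by
  have := hB.four
  exact Finset.card_pos.1 (by omega)

lemma blk_of_mem (hE : Exc G k m blk o) {B : Finset V} (hBB : B ∈ Finset.univ.image blk)
    {v : V} (hv : v ∈ B) : blk v = B := by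
  obtain ⟨b, _, rfl⟩ := Finset.mem_image.1 hBB
  exact hE.eq v b hv

lemma npc_pos (hE : Exc G k m blk o) (hB : Barrier G X lab K) {c : V} (hc : c ∈ K)
    (ho : outc X lab o c < k) : 1 ≤ npc X lab K blk c := by
  by_contra hcon
  have h0 : npc X lab K blk c = 0 := by omega
  unfold npc at h0
  rw [Finset.card_eq_zero, Finset.filter_eq_empty_iff] at h0
  have hcl : ∀ v ∈ part X lab c, blk v ⊆ part X lab c := by
    intro v hv
    by_contra hn
    rw [← Finset.sdiff_nonempty] at hn
    refine h0 (x := (blk v, c)) (mem_pieces.2 ⟨⟨Finset.mem_image_of_mem _ (Finset.mem_univ v), hc⟩,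
      ⟨v, Finset.mem_inter.2 ⟨hE.mem v, hv⟩⟩, hn⟩) rfl
  obtain ⟨x, hx⟩ := X_ne hB
  have h1 := closed_cut hE hcl (Finset.card_pos.1 (hB.odd c hc).pos) (by
    intro h
    have := Finset.mem_univ x
    rw [← h, mem_part] at this
    exact this.1 hx)
  have h2 : ((part X lab c).filter fun v => o v ∉ part X lab c) ⊆
      (part X lab c).filter fun v => o v ∈ X := by
    intro v hv
    rw [Finset.mem_filter] at hv ⊢
    refine ⟨hv.1, ?_⟩
    by_contra h
    exact hv.2 (o_part hE hB hv.1 h)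
  have h3 := Finset.card_le_card h2
  unfold outc at ho
  omega

lemma npc_one {c : V} (h : npc X lab K blk c = 1) : ∃ B, (B, c) ∈ pieces X lab K blk ∧
    ∀ B', (B', c) ∈ pieces X lab K blk → B' = B := by
  unfold npc at h
  obtain ⟨⟨B, d⟩, hp⟩ := Finset.card_eq_one.1 h
  have h1 : (B, d) ∈ (pieces X lab K blk).filter fun p => p.2 = c := by rw [hp]; simp
  rw [Finset.mem_filter] at h1
  obtain ⟨h1, rfl⟩ := h1
  refine ⟨B, h1, fun B' h' => ?_⟩
  have : (B', d) ∈ (pieces X lab K blk).filter fun p => p.2 = d := Finset.mem_filter.2 ⟨h', rfl⟩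
  simp only at hp this
  rw [hp, Finset.mem_singleton] at this
  exact (Prod.mk.inj this).1

lemma closed_aux (hE : Exc G k m blk o) {B : Finset V} {c : V} (hc : c ∈ K)
    (hu : ∀ B', (B', c) ∈ pieces X lab K blk → B' = B) {v : V} (hv : v ∈ part X lab c)
    (hvB : v ∉ B) : blk v ⊆ part X lab c := by
  by_contra hn
  rw [← Finset.sdiff_nonempty] at hn
  have := hu (blk v) (mem_pieces.2 ⟨⟨Finset.mem_image_of_mem _ (Finset.mem_univ v), hc⟩,
      ⟨v, Finset.mem_inter.2 ⟨hE.mem v, hv⟩⟩, hn⟩)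
  exact hvB (this ▸ hE.mem v)

lemma U_cut (hE : Exc G k m blk o) (hB : Barrier G X lab K) {B : Finset V} {c : V} (hc : c ∈ K)
    (hBB : B ∈ Finset.univ.image blk)
    (hu : ∀ B', (B', c) ∈ pieces X lab K blk → B' = B) (hne : (part X lab c \ B).Nonempty) :
    k ≤ outc X lab o c + (B ∩ part X lab c).card := by
  have hcl : ∀ v ∈ part X lab c \ B, blk v ⊆ part X lab c \ B := by
    intro v hv w hw
    rw [Finset.mem_sdiff] at hv ⊢
    refine ⟨closed_aux hE hc hu hv.1 hv.2 hw, fun hwB => hv.2 ?_⟩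
    rw [← blk_of_mem hE hBB hwB, hE.eq _ _ hw]
    exact hE.mem v
  obtain ⟨x, hx⟩ := X_ne hB
  have h1 := closed_cut hE hcl hne (by
    intro h
    have := Finset.mem_univ x
    rw [← h, Finset.mem_sdiff, mem_part] at this
    exact this.1.1 hx)
  have h2 : ((part X lab c \ B).filter fun v => o v ∉ part X lab c \ B) ⊆
      ((part X lab c).filter fun v => o v ∈ X) ∪ (B ∩ part X lab c).image o := by
    intro v hv
    rw [Finset.mem_filter, Finset.mem_sdiff, Finset.mem_sdiff] at hv
    rw [Finset.mem_union, Finset.mem_filter]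
    by_cases h : o v ∈ X
    · exact Or.inl ⟨hv.1.1, h⟩
    · right
      have h3 := o_part hE hB hv.1.1 h
      refine Finset.mem_image.2 ⟨o v, Finset.mem_inter.2 ⟨?_, h3⟩, hE.invol v⟩
      by_contra h4
      exact hv.2 ⟨h3, h4⟩
  have h3 := (Finset.card_le_card h2).trans (Finset.card_union_le _ _)
  have h4 : ((B ∩ part X lab c).image o).card ≤ (B ∩ part X lab c).card := Finset.card_image_le
  unfold outc
  omega

lemma W_cut (hE : Exc G k m blk o) (hB : Barrier G X lab K) {B : Finset V} {c : V} (hc : c ∈ K)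
    (hBB : B ∈ Finset.univ.image blk)
    (hu : ∀ B', (B', c) ∈ pieces X lab K blk → B' = B)
    (hlt : (B \ part X lab c).card < X.card) :
    k ≤ outc X lab o c + (B \ part X lab c).card := by
  have hcl : ∀ v ∈ part X lab c ∪ B, blk v ⊆ part X lab c ∪ B := by
    intro v hv
    by_cases h : v ∈ B
    · rw [blk_of_mem hE hBB h]; exact Finset.subset_union_right
    · have : v ∈ part X lab c := (Finset.mem_union.1 hv).resolve_right h
      exact (closed_aux hE hc hu this h).trans Finset.subset_union_left
  have h1 := closed_cut hE hcl
    ((Finset.card_pos.1 (hB.odd c hc).pos).mono Finset.subset_union_left) (by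
    intro h
    have : X ⊆ B \ part X lab c := by
      intro x hx
      have h5 := Finset.mem_univ x
      rw [← h, Finset.mem_union] at h5
      have h6 : x ∉ part X lab c := fun h7 => (mem_part.1 h7).1 hx
      exact Finset.mem_sdiff.2 ⟨h5.resolve_left h6, h6⟩
    have := Finset.card_le_card this
    omega)
  have h2 : ((part X lab c ∪ B).filter fun v => o v ∉ part X lab c ∪ B) ⊆
      ((part X lab c).filter fun v => o v ∈ X) ∪ (B \ part X lab c) := by
    intro v hv
    rw [Finset.mem_filter, Finset.mem_union, Finset.mem_union] at hv
    rw [Finset.mem_union, Finset.mem_filter, Finset.mem_sdiff]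
    by_cases h : v ∈ part X lab c
    · left
      refine ⟨h, ?_⟩
      by_contra h3
      exact hv.2 (Or.inl (o_part hE hB h h3))
    · exact Or.inr ⟨hv.1.resolve_left h, h⟩
  have h3 := (Finset.card_le_card h2).trans (Finset.card_union_le _ _)
  unfold outc
  omega

lemma outc_sub (hE : Exc G k m blk o) (hB : Barrier G X lab K) {B : Finset V} {c : V}
    (hBB : B ∈ Finset.univ.image blk) (hs : part X lab c ⊆ B) :
    outc X lab o c = (part X lab c).card := by
  unfold outc
  congr 1
  rw [Finset.filter_true_of_mem]
  intro v hv
  by_contra h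
  have h1 := hs (o_part hE hB hv h)
  rw [← blk_of_mem hE hBB (hs hv)] at h1
  exact hE.out v h1

/-- A nontrivial part with a single piece and a single outer edge is impossible. -/
lemma single_single (hE : Exc G k m blk o) (hB : Barrier G X lab K) (hreg : G.IsRegularOfDegree k)
    (hk : 5 ≤ k) {c : V} (hc : c ∈ K) (h3 : 3 ≤ (part X lab c).card)
    (hps : X.card ≤ (pieces X lab K blk).card + 2)
    (h1 : npc X lab K blk c = 1) (ho : outc X lab o c = 1) : False := by
  obtain ⟨B, hp, hu⟩ := npc_one h1
  obtain ⟨⟨hBB, _⟩, hne1, hne2⟩ := mem_pieces.1 hp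
  have hU : (part X lab c \ B).Nonempty := by
    rw [Finset.sdiff_nonempty]
    intro hs
    have := outc_sub hE hB hBB hs
    omega
  have hP := U_cut hE hB hc hBB hu hU
  have hcardB : (B ∩ part X lab c).card + (B \ part X lab c).card = m := by
    rw [Finset.card_inter_add_card_sdiff]
    obtain ⟨b, _, rfl⟩ := Finset.mem_image.1 hBB
    exact hE.card b
  have hsub : B \ part X lab c ⊆ X := by
    intro v hv
    by_contra hvX
    rw [Finset.mem_sdiff] at hv
    have h5 := hE.inner hreg v
    rw [blk_of_mem hE hBB hv.1, ec_singleton] at h5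
    have h6 : insert v (B.filter (G.Adj v)) ⊆ B \ part X lab c := by
      intro w hw
      rw [Finset.mem_insert, Finset.mem_filter] at hw
      rw [Finset.mem_sdiff]
      rcases hw with rfl | ⟨hw, hvw⟩
      · exact hv
      · refine ⟨hw, fun hwc => hv.2 ?_⟩
        rw [mem_part] at hwc ⊢
        exact ⟨hvX, (hB.adj v w hvX hwc.1 hvw).trans hwc.2⟩
    have h7 := Finset.card_le_card h6
    rw [Finset.card_insert_of_notMem (by simp)] at h7
    have := hE.mle
    omega
  have hBX : B ∩ X = B \ part X lab c := by
    ext v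
    rw [Finset.mem_inter, Finset.mem_sdiff]
    constructor
    · rintro ⟨h, h'⟩; exact ⟨h, fun h8 => (mem_part.1 h8).1 h'⟩
    · intro h; exact ⟨h.1, hsub (Finset.mem_sdiff.2 h)⟩
  have hnp : npb X lab K blk B ≤ 1 := by
    unfold npb
    rw [Finset.card_le_one]
    have key : ∀ p ∈ (pieces X lab K blk).filter (fun p => p.1 = B), p = (B, c) := by
      rintro ⟨B', d⟩ hd
      rw [Finset.mem_filter] at hd
      obtain ⟨hd, hd2⟩ := hd
      have hd3 : B' = B := hd2
      subst hd3
      obtain ⟨_, ⟨v, hv⟩, _⟩ := mem_pieces.1 hd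
      rw [Finset.mem_inter] at hv
      have hvX := (mem_part.1 hv.2).1
      have hvc : v ∈ part X lab c := by
        by_contra hvc
        exact hvX (hsub (Finset.mem_sdiff.2 ⟨hv.1, hvc⟩))
      rw [← (mem_part.1 hv.2).2, ← (mem_part.1 hvc).2]
    intro a ha b hb
    rw [key a ha, key b hb]
  have hex := block_excess hE hB hreg hk hBB
  rw [hBX] at hex
  have hx4 := hB.four
  have := W_cut hE hB hc hBB hu (by omega)
  omega

/-- A nontrivial part with a single piece and three outer edges has a large piece boundary. -/
lemma single_triple (hE : Exc G k m blk o) (hB : Barrier G X lab K) (hreg : G.IsRegularOfDegree k)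
    (hk : 5 ≤ k) {c : V} (hc : c ∈ K) (h3 : 3 ≤ (part X lab c).card)
    (hps : (pieces X lab K blk).card + 1 = X.card) (hei : 4 ≤ eiX G X blk)
    (h1 : npc X lab K blk c = 1) (ho : outc X lab o c = 3) : False := by
  obtain ⟨B, hp, hu⟩ := npc_one h1
  obtain ⟨⟨hBB, _⟩, hne1, hne2⟩ := mem_pieces.1 hp
  have hP : 2 ≤ (B ∩ part X lab c).card := by
    by_cases hU : (part X lab c \ B).Nonempty
    · have := U_cut hE hB hc hBB hu hU
      omega
    · have hs : part X lab c ⊆ B := by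
        rw [Finset.sdiff_nonempty, not_not] at hU
        exact hU
      rw [Finset.inter_eq_right.2 hs]
      omega
  have hx4 := hB.four
  by_cases hq : (B \ part X lab c).card ≤ 1
  · have := W_cut hE hB hc hBB hu (by omega)
    omega
  · have h4 := hE.din_low2 hreg hk hBB (Finset.inter_subset_left : B ∩ part X lab c ⊆ B) hP
      (by rw [sdiff_inter_part]; omega)
    rw [sdiff_inter_part] at h4
    have h5 := din_total hE hB hreg
    rw [← Finset.add_sum_erase _ _ hp] at h5
    have h6 := Finset.card_nsmul_le_sum ((pieces X lab K blk).erase (B, c))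
      (fun p => din G X lab p) (k - 1)
      (fun p hp => piece_low hE hreg hk (Finset.mem_of_mem_erase hp))
    rw [smul_eq_mul, Finset.card_erase_of_mem hp] at h6
    have h7 : din G X lab (B, c) = ec G (B ∩ part X lab c) (B \ part X lab c) := rfl
    have h8 : (k - 1) * X.card = ((pieces X lab K blk).card - 1) * (k - 1) + 2 * (k - 1) := by
      have : X.card = ((pieces X lab K blk).card - 1) + 2 := by omega
      rw [this]; ring
    omega

lemma two_le_sum {f : V → ℕ} (hf : ∀ c ∈ K, 1 ≤ f c) {a b : V} (ha : a ∈ K) (hb : b ∈ K)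
    (hab : a ≠ b) : f a + f b + K.card ≤ ∑ c ∈ K, f c + 2 := by
  rw [← Finset.add_sum_erase _ _ ha,
    ← Finset.add_sum_erase _ _ (Finset.mem_erase.2 ⟨hab.symm, hb⟩)]
  have := Finset.card_nsmul_le_sum ((K.erase a).erase b) (fun c => f c) 1 (fun c hc =>
    hf c (Finset.mem_of_mem_erase (Finset.mem_of_mem_erase hc)))
  rw [Finset.card_erase_of_mem (Finset.mem_erase.2 ⟨hab.symm, hb⟩),
    Finset.card_erase_of_mem ha] at this
  simp only [smul_eq_mul, mul_one] at this
  omega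

lemma contra_exc (hE : Exc G k m blk o) (hB : Barrier G X lab K) (hreg : G.IsRegularOfDegree k)
    (hk : 5 ≤ k)
    (hnb : ∀ S : Finset V, S.Nonempty → nb G S ≠ Finset.univ → S.card + 4 ≤ (nb G S).card) :
    False := by
  obtain ⟨a, b, ha, hb, hab⟩ := Finset.one_lt_card_iff.1 (two_nontriv hB hnb)
  unfold nontriv at ha hb
  rw [Finset.mem_filter] at ha hb
  obtain ⟨ha, ha3⟩ := ha
  obtain ⟨hb, hb3⟩ := hb
  have hle := hB.le
  have hec := hB.ecX
  have heio := ei_eo hE (X := X)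
  have hos := outc_sum hE hB
  have hodd : ∀ c ∈ K, 1 ≤ outc X lab o c := fun c hc => (outc_odd hE hB hc).pos
  have hoab := two_le_sum hodd ha hb hab
  have hlt : ∀ c ∈ K, outc X lab o c < k := by
    intro c hc
    by_cases hca : c = a
    · subst hca
      have := hodd b hb
      omega
    · have h1 := two_le_sum hodd hc ha hca
      have := hodd a ha
      omega
  have hnp : ∀ c ∈ K, 1 ≤ npc X lab K blk c := fun c hc => npc_pos hE hB hc (hlt c hc)
  have hnab := two_le_sum hnp ha hb hab
  have hns := npc_sum (X := X) (lab := lab) (K := K) (blk := blk)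
  have hpsle := ps_le hE hB hreg hk
  have hps1 : (pieces X lab K blk).card + 1 ≤ X.card := by
    by_contra hcon
    have h1 : X.card ≤ (pieces X lab K blk).card := by omega
    have h2 := Nat.mul_le_mul_left (k - 1) h1
    have := hodd a ha
    have := hodd b hb
    omega
  have ha1 := hodd a ha
  have hb1 := hodd b hb
  have ha2 := hnp a ha
  have hb2 := hnp b hb
  have hoa := outc_odd hE hB ha
  have hob := outc_odd hE hB hb
  rw [Nat.odd_iff] at hoa hob
  have sa := single_single hE hB hreg hk ha ha3 (by omega)
  have sb := single_single hE hB hreg hk hb hb3 (by omega)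
  by_cases hna : npc X lab K blk a = 1
  · have h1 : outc X lab o a ≠ 1 := fun h => sa hna h
    have h2 : outc X lab o a = 3 := by omega
    have h3 : outc X lab o b = 1 := by omega
    have h4 : npc X lab K blk b ≠ 1 := fun h => sb h h3
    exact single_triple hE hB hreg hk ha ha3 (by omega) (by omega) hna h2
  · have h4 : npc X lab K blk b = 1 := by omega
    have h1 : outc X lab o b ≠ 1 := fun h => sb h4 h
    have h2 : outc X lab o b = 3 := by omega
    exact single_triple hE hB hreg hk hb hb3 (by omega) (by omega) h4 h2

end ExceptionalContra

end TwoExt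

/-- Every connected vertex-transitive non-bipartite simple graph
of even order at least 6 whose common degree is at least 5 is 2-extendable. -/
theorem statement1 {V : Type*} [Fintype V] [DecidableEq V]
    (G : SimpleGraph V) [DecidableRel G.Adj] (k : ℕ)
    (hconn : G.Connected) (hvt : VertexTransitive G) (hnb : ¬ G.Colorable 2)
    (heven : Even (Fintype.card V)) (hcard : 6 ≤ Fintype.card V)
    (hreg : G.IsRegularOfDegree k) (hk : 5 ≤ k) :
    Extendable G 2 := by
  classical
  have hext : ∀ M : G.Subgraph, M.IsMatching → M.edgeSet.ncard = 2 →
      ∃ P : G.Subgraph, P.IsPerfectMatching ∧ M ≤ P := by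
    intro M hM h2
    by_contra hno
    obtain ⟨X, lab, K, hB⟩ := TwoExt.barrier_of_not_ext G heven hM h2 hno
    have hmain := TwoExt.nb_main G hconn hvt hnb heven hreg hk
    rcases TwoExt.cut_dichotomy G hconn hvt hreg hk with hcut |
      ⟨blk, o, m, h1, h2, h3, h4, h5, h6, h7, h8, h9⟩
    · exact TwoExt.contra_normal hB hreg hk hmain.1 hmain.2 hcut
    · exact TwoExt.contra_exc (blk := blk) (o := o) (m := m)
        ⟨h1, h2, h3, h4, h5, h6, h7, h8, h9⟩ hB hreg hk hmain.1
  obtain ⟨M, hM, h2⟩ := TwoExt.exists_two_matching G hcard hreg hk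
  obtain ⟨P, hP, _⟩ := hext M hM h2
  exact ⟨⟨P, hP⟩, hext⟩
end

section
/- Let G be a connected triangle-free vertex-transitive 6-regular simple graph of even order. If there exist 3 distinct vertices of G having the same neighborhood, then G is bipartite. -/
open SimpleGraph

theorem aux_two_colorable {W : Type*} [Fintype W] (Q : SimpleGraph W) [DecidableRel Q.Adj]
    (hconn : Q.Connected) (hdeg : ∀ v, Q.degree v ≤ 2)
    (heven : ∀ v, Q.degree v = 2 → Even (Fintype.card W)) : Q.Colorable 2 := by
  classical
  by_cases hac : Q.IsAcyclic
  · exact hac.isBipartite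
  · simp only [IsAcyclic, not_forall, not_not] at hac
    obtain ⟨v, p, hp⟩ := hac
    obtain ⟨n, hn⟩ : ∃ n, p.length = n + 3 := ⟨p.length - 3, by have := hp.three_le_length; omega⟩
    obtain ⟨f⟩ := (cycleGraph_isContained_iff (G := Q) (n := n + 3) (by omega)).2 ⟨v, p, hp, hn⟩
    have key : ∀ i : Fin (n + 3), ((cycleGraph (n + 3)).neighborFinset i).image f.toHom
        = Q.neighborFinset (f.toHom i) := by
      intro i
      apply Finset.eq_of_subset_of_card_le
      · intro w hw
        simp only [Finset.mem_image, mem_neighborFinset] at hw ⊢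
        obtain ⟨j, hj, rfl⟩ := hw
        exact f.toHom.map_adj hj
      · rw [Finset.card_image_of_injective _ f.injective', card_neighborFinset_eq_degree,
          card_neighborFinset_eq_degree, cycleGraph_degree_three_le]
        exact hdeg _
    have key2 : ∀ i w, Q.Adj (f.toHom i) w → ∃ j, (cycleGraph (n + 3)).Adj i j ∧ f.toHom j = w := by
      intro i w h
      have : w ∈ Q.neighborFinset (f.toHom i) := by simpa using h
      rw [← key i] at this
      simpa using this
    have hsurj : Function.Surjective f.toHom := by
      intro w
      by_contra hw
      obtain ⟨q⟩ := hconn.preconnected (f.toHom 0) w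
      obtain ⟨d, -, ⟨i, hi⟩, h2⟩ := q.exists_boundary_dart (Set.range f.toHom) ⟨0, rfl⟩ hw
      have := d.adj
      rw [← hi] at this
      obtain ⟨j, -, hj⟩ := key2 _ _ this
      exact h2 ⟨j, hj⟩
    have hcard : Fintype.card W = n + 3 := by
      rw [← Fintype.card_of_bijective ⟨f.injective', hsurj⟩, Fintype.card_fin]
    have h0 : Q.degree (f.toHom 0) = 2 := by
      rw [← card_neighborFinset_eq_degree, ← key, Finset.card_image_of_injective _ f.injective',
        card_neighborFinset_eq_degree, cycleGraph_degree_three_le]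
    have he := heven _ h0
    rw [hcard] at he
    have hc : (cycleGraph (n + 3)).Colorable 2 :=
      (cycleGraph.bicoloring_of_even (n + 3) he).colorable
    obtain ⟨c⟩ := hc
    choose g hg using hsurj
    refine ⟨Coloring.mk (fun w => c (g w)) ?_⟩
    intro u w huw
    rw [← hg u] at huw
    obtain ⟨j, hj, hjw⟩ := key2 _ _ huw
    have : j = g w := f.injective' (by rw [hg]; exact hjw)
    rw [← this]
    exact c.valid hj

/-- A connected triangle-free vertex-transitive 6-regular graph
of even order with three distinct vertices having the same neighborhood is
bipartite. -/
theorem statement6 {V : Type*} [Fintype V] [DecidableEq V]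
    (G : SimpleGraph V) [DecidableRel G.Adj]
    (hconn : G.Connected) (htri : G.CliqueFree 3) (hvt : VertexTransitive G)
    (hreg : G.IsRegularOfDegree 6) (heven : Even (Fintype.card V))
    (a b c : V) (hab : a ≠ b) (hac : a ≠ c) (hbc : b ≠ c)
    (h1 : G.neighborSet a = G.neighborSet b) (h2 : G.neighborSet b = G.neighborSet c) :
    G.Colorable 2 := by
  classical
  let s : Setoid V := Setoid.ker G.neighborSet
  have hs : ∀ x y : V, (Quotient.mk s x = Quotient.mk s y) ↔ G.neighborSet x = G.neighborSet y :=
    fun x y => Quotient.eq (r := s)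
  have hout : ∀ x : V, G.neighborSet (Quotient.mk s x).out = G.neighborSet x := by
    intro x
    rw [← hs, Quotient.out_eq]
  have hadjl : ∀ x y z : V, G.neighborSet x = G.neighborSet y → (G.Adj x z ↔ G.Adj y z) := by
    intro x y z h
    rw [← mem_neighborSet, h, mem_neighborSet]
  let Q : SimpleGraph (Quotient s) :=
    { Adj := fun p q => G.Adj p.out q.out
      symm := ⟨fun p q h => h.symm⟩
      loopless := ⟨fun p h => G.loopless.irrefl _ h⟩ }
  have hQ : ∀ x y : V, Q.Adj (Quotient.mk s x) (Quotient.mk s y) ↔ G.Adj x y := by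
    intro x y
    change G.Adj _ _ ↔ _
    rw [hadjl _ _ _ (hout x), G.adj_comm, hadjl _ _ _ (hout y), G.adj_comm]
  let π : G →g Q := ⟨Quotient.mk s, fun {x y} h => (hQ x y).2 h⟩
  let cl : V → Finset V := fun x => Finset.univ.filter fun y => G.neighborSet y = G.neighborSet x
  have hle : ∀ x y, (cl x).card ≤ (cl y).card := by
    intro x y
    obtain ⟨φ, hφ⟩ := hvt x y
    apply Finset.card_le_card_of_injOn φ
    · intro z hz
      simp only [cl, Finset.coe_filter, Finset.mem_univ, true_and, Set.mem_setOf_eq] at hz ⊢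
      rw [← hφ]
      ext w
      obtain ⟨w, rfl⟩ := φ.surjective w
      simp only [mem_neighborSet, φ.map_adj_iff]
      exact hadjl _ _ _ hz
    · exact φ.injective.injOn
  have hcl : ∀ x, (cl x).card = (cl a).card := fun x => le_antisymm (hle _ _) (hle _ _)
  have h3 : 3 ≤ (cl a).card := by
    rw [← Finset.card_eq_three.2 ⟨a, b, c, hab, hac, hbc, rfl⟩]
    apply Finset.card_le_card
    intro z hz
    simp only [Finset.mem_insert, Finset.mem_singleton] at hz
    simp only [cl, Finset.mem_filter, Finset.mem_univ, true_and]
    rcases hz with rfl | rfl | rfl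
    · rfl
    · exact h1.symm
    · exact (h1.trans h2).symm
  have hfib : ∀ q : Quotient s,
      (Finset.univ.filter fun x => Quotient.mk s x = q).card = (cl a).card := by
    intro q
    induction q using Quotient.inductionOn with
    | _ x =>
      rw [← hcl x]
      congr 1
      ext y
      simp only [cl, Finset.mem_filter, Finset.mem_univ, true_and]
      exact hs y x
  have hcardV : Fintype.card V = Fintype.card (Quotient s) * (cl a).card := by
    rw [← Finset.card_univ, Finset.card_eq_sum_card_fiberwise (f := Quotient.mk s)
      (t := Finset.univ) (fun _ _ => by simp), Finset.sum_congr rfl (fun q _ => hfib q)]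
    simp
  have hdeg : ∀ q : Quotient s, Q.degree q * (cl a).card = 6 := by
    intro q
    induction q using Quotient.inductionOn with
    | _ x =>
      have hx := hreg x
      rw [← card_neighborFinset_eq_degree, Finset.card_eq_sum_card_fiberwise (f := Quotient.mk s)
        (t := Q.neighborFinset (Quotient.mk s x))
        (fun y hy => by
          have : G.Adj x y := by simpa using hy
          simpa using (hQ x y).2 this)] at hx
      rw [← hx, ← card_neighborFinset_eq_degree, ← smul_eq_mul, ← Finset.sum_const]
      apply Finset.sum_congr rfl
      intro q hq
      rw [← hfib q]
      congr 1
      ext y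
      simp only [Finset.mem_filter, Finset.mem_univ, true_and, mem_neighborFinset] at hq ⊢
      refine ⟨fun h => ⟨?_, h⟩, fun h => h.2⟩
      rw [← h] at hq
      exact (hQ x y).1 hq
  have hconnQ : Q.Connected := by
    haveI : Nonempty (Quotient s) := ⟨Quotient.mk s a⟩
    refine ⟨?_⟩
    intro p q
    induction p using Quotient.inductionOn with
    | _ x =>
      induction q using Quotient.inductionOn with
      | _ y => exact (hconn.preconnected x y).map π
  obtain ⟨C⟩ : Q.Colorable 2 := by
    apply aux_two_colorable Q hconnQ
    · intro q
      have := hdeg q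
      by_contra hlt
      nlinarith
    · intro q h2
      have := hdeg q
      rw [h2] at this
      have h3 : (cl a).card = 3 := by omega
      rw [hcardV, h3, Nat.even_mul] at heven
      rcases heven with h | h
      · exact h
      · exact absurd h (by decide)
  exact ⟨C.comp π⟩
end

section
/- Let G be a connected triangle-free vertex-transitive simple graph of degree k ≥ 5, let s be an integer with 4 ≤ s ≤ 8, suppose λ_s(G) exists and λ_s(G) ≤ 3k, and let S and T be two distinct λ_s-atoms of G with S ∩ T ≠ ∅. Then d_G(S ∩ T) + d_G(S ∪ T) ≤ 2λ_s(G), d_G(S \ T) + d_G(T \ S) ≤ 2λ_s(G), |S ∩ T| ≤ s − 1, and |S \ T| ≤ s − 1. -/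
open SimpleGraph

section Helpers

variable {V : Type*} [Fintype V]

open Classical in
/-- Ordered-pair count of the edge boundary. -/
noncomputable def cutCount (G : SimpleGraph V) (X : Set V) : ℕ :=
  ∑ p : V × V, if (p.1 ∈ X ∧ p.2 ∉ X ∧ G.Adj p.1 p.2) then 1 else 0

theorem ncard_edgeBoundary (G : SimpleGraph V) (X : Set V) :
    (edgeBoundary G X).ncard = cutCount G X := by
  classical
  have h1 : edgeBoundary G X = (fun p : V × V => s(p.1, p.2)) ''
      {p : V × V | p.1 ∈ X ∧ p.2 ∉ X ∧ G.Adj p.1 p.2} := by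
    ext e
    constructor
    · rintro ⟨he, x, hx, y, hy, rfl⟩
      exact ⟨(x, y), ⟨hx, hy, he⟩, rfl⟩
    · rintro ⟨⟨x, y⟩, ⟨hx, hy, he⟩, rfl⟩
      exact ⟨he, x, hx, y, hy, rfl⟩
  rw [h1, Set.ncard_image_of_injOn]
  · rw [Set.ncard_eq_toFinset_card', cutCount, Finset.sum_boole]
    simp
  · rintro ⟨x, y⟩ ⟨hx, hy, -⟩ ⟨x', y'⟩ ⟨hx', hy', -⟩ h
    simp only [Sym2.eq_iff] at h
    rcases h with ⟨rfl, rfl⟩ | ⟨rfl, rfl⟩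
    · rfl
    · exact absurd hx' hy

theorem edgeBoundary_compl' (G : SimpleGraph V) (X : Set V) :
    edgeBoundary G Xᶜ = edgeBoundary G X := by
  ext e
  constructor
  · rintro ⟨he, x, hx, y, hy, rfl⟩
    exact ⟨he, y, by simpa using hy, x, hx, Sym2.eq_swap⟩
  · rintro ⟨he, x, hx, y, hy, rfl⟩
    exact ⟨he, y, hy, x, by simpa using hx, Sym2.eq_swap⟩

theorem edgeBoundary_submod (G : SimpleGraph V) (S T : Set V) :
    (edgeBoundary G (S ∩ T)).ncard + (edgeBoundary G (S ∪ T)).ncard ≤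
      (edgeBoundary G S).ncard + (edgeBoundary G T).ncard := by
  classical
  simp only [ncard_edgeBoundary, cutCount, ← Finset.sum_add_distrib]
  apply Finset.sum_le_sum
  rintro ⟨x, y⟩ -
  by_cases h1 : x ∈ S <;> by_cases h2 : x ∈ T <;> by_cases h3 : y ∈ S <;>
    by_cases h4 : y ∈ T <;> by_cases h5 : G.Adj x y <;> simp [h1, h2, h3, h4, h5]

theorem edgeBoundary_sdiff_submod (G : SimpleGraph V) (S T : Set V) :
    (edgeBoundary G (S \ T)).ncard + (edgeBoundary G (T \ S)).ncard ≤
      (edgeBoundary G S).ncard + (edgeBoundary G T).ncard := by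
  have h := edgeBoundary_submod G S Tᶜ
  rw [edgeBoundary_compl' G T] at h
  have h2 : T \ S = (S ∪ Tᶜ)ᶜ := by ext; simp [and_comm]
  rw [h2, edgeBoundary_compl']
  exact h

/-- Splitting off a union of components. -/
theorem edgeBoundary_split (G : SimpleGraph V) (X A : Set V) (hA : A ⊆ X)
    (hno : ∀ x ∈ A, ∀ y ∈ X, G.Adj x y → y ∈ A) :
    (edgeBoundary G X).ncard = (edgeBoundary G A).ncard + (edgeBoundary G (X \ A)).ncard := by
  classical
  simp only [ncard_edgeBoundary, cutCount, ← Finset.sum_add_distrib]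
  apply Finset.sum_congr rfl
  rintro ⟨x, y⟩ -
  by_cases h5 : G.Adj x y
  · have e1 := hno x
    have e2 := hno y
    have e3 := @hA x
    have e4 := @hA y
    have h6 := h5.symm
    by_cases h1 : x ∈ X <;> by_cases h2 : x ∈ A <;> by_cases h3 : y ∈ X <;>
      by_cases h4 : y ∈ A <;> simp_all
  · simp [h5]

theorem mantel (G : SimpleGraph V) [DecidableEq V] [DecidableRel G.Adj]
    (htri : G.CliqueFree 3) (A : Finset V) :
    2 * ∑ x ∈ A, (A.filter (G.Adj x)).card ≤ A.card ^ 2 := by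
  set d : V → ℕ := fun x => (A.filter (G.Adj x)).card with hd
  have key : ∀ x ∈ A, ∀ y ∈ A.filter (G.Adj x), d x + d y ≤ A.card := by
    intro x hx y hy
    rw [Finset.mem_filter] at hy
    rw [hd]
    simp only
    rw [← Finset.card_union_of_disjoint]
    · apply Finset.card_le_card
      intro z
      simp only [Finset.mem_union, Finset.mem_filter]
      tauto
    · rw [Finset.disjoint_left]
      intro z hz hz'
      rw [Finset.mem_filter] at hz hz'
      exact htri {x, y, z} (is3Clique_triple_iff.2 ⟨hy.2, hz.2, hz'.2⟩)
  have h1 : ∑ x ∈ A, ∑ y ∈ A.filter (G.Adj x), (d x + d y) ≤ (∑ x ∈ A, d x) * A.card := by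
    rw [Finset.sum_mul]
    apply Finset.sum_le_sum
    intro x hx
    exact (Finset.sum_le_card_nsmul _ _ _ (key x hx)).trans (by simp [hd])
  have h2 : ∑ x ∈ A, ∑ y ∈ A.filter (G.Adj x), d y = ∑ x ∈ A, d x ^ 2 := by
    rw [Finset.sum_comm' (t' := A) (s' := fun y => A.filter (G.Adj y))]
    · apply Finset.sum_congr rfl
      intro x _
      simp [hd, sq]
    · intro x y
      simp only [Finset.mem_filter, G.adj_comm x y]
      tauto
  have h3 : ∑ x ∈ A, ∑ y ∈ A.filter (G.Adj x), d x = ∑ x ∈ A, d x ^ 2 := by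
    apply Finset.sum_congr rfl
    intro x _
    simp [hd, sq]
  simp only [Finset.sum_add_distrib] at h1
  rw [h2, h3] at h1
  have h4 : (∑ x ∈ A, d x) ^ 2 ≤ A.card * ∑ x ∈ A, d x ^ 2 := sq_sum_le_card_mul_sum_sq
  change 2 * ∑ x ∈ A, d x ≤ _
  generalize ∑ x ∈ A, d x = M at *
  generalize ∑ x ∈ A, d x ^ 2 = Q at *
  rcases Nat.eq_zero_or_pos M with rfl | hM
  · simp
  · refine Nat.le_of_mul_le_mul_left ?_ hM
    nlinarith [Nat.mul_le_mul_left A.card h1]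

theorem cut_lower (G : SimpleGraph V) [DecidableEq V] [DecidableRel G.Adj] (k : ℕ)
    (htri : G.CliqueFree 3) (hreg : G.IsRegularOfDegree k) (X : Set V) :
    ∃ M : ℕ, (edgeBoundary G X).ncard + M = k * X.ncard ∧ 2 * M ≤ X.ncard ^ 2 := by
  classical
  refine ⟨∑ x ∈ X.toFinset, (X.toFinset.filter (G.Adj x)).card, ?_, ?_⟩
  · have h1 : (edgeBoundary G X).ncard =
        ∑ x ∈ X.toFinset, (Finset.univ.filter (fun y => y ∉ X ∧ G.Adj x y)).card := by
      rw [ncard_edgeBoundary, cutCount, Fintype.sum_prod_type,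
        ← Finset.sum_subset (Finset.subset_univ X.toFinset)]
      · apply Finset.sum_congr rfl
        intro x hx
        rw [Set.mem_toFinset] at hx
        simp [hx]
      · intro x _ hx
        rw [Set.mem_toFinset] at hx
        simp [hx]
    rw [h1, ← Finset.sum_add_distrib, Set.ncard_eq_toFinset_card', mul_comm k, ← smul_eq_mul]
    apply Finset.sum_eq_card_nsmul
    intro x hx
    rw [← hreg x, ← G.card_neighborFinset_eq_degree, ← Finset.card_union_of_disjoint]
    · congr 1
      ext y
      simp only [Finset.mem_union, Finset.mem_filter, Finset.mem_univ, true_and,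
        Set.mem_toFinset, mem_neighborFinset]
      tauto
    · rw [Finset.disjoint_left]
      intro y
      simp only [Finset.mem_filter, Finset.mem_univ, true_and, Set.mem_toFinset]
      tauto
  · rw [Set.ncard_eq_toFinset_card']
    exact mantel G htri _

theorem cut_ge (G : SimpleGraph V) [DecidableEq V] [DecidableRel G.Adj] (k : ℕ)
    (htri : G.CliqueFree 3) (hreg : G.IsRegularOfDegree k) (hk : 5 ≤ k) (X : Set V)
    (h1 : 1 ≤ X.ncard) (h7 : X.ncard ≤ 7) :
    k ≤ (edgeBoundary G X).ncard ∧
    (2 ≤ X.ncard → 2 * k ≤ (edgeBoundary G X).ncard + 2) ∧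
    (3 ≤ X.ncard → 2 * k < (edgeBoundary G X).ncard) := by
  obtain ⟨M, hM, hM2⟩ := cut_lower G k htri hreg X
  generalize X.ncard = a at *
  interval_cases a <;> omega

theorem lambda_le (G : SimpleGraph V) (s : ℕ) (F : Set (Sym2 V))
    (h : IsRestrictedEdgeCut G s F) : lambdaS G s ≤ F.ncard :=
  Nat.sInf_le ⟨F, h, rfl⟩

theorem reach_side (G : SimpleGraph V) (X : Set V) {u v : V}
    (h : (G.deleteEdges (edgeBoundary G X)).Reachable u v) (hu : u ∈ X) : v ∈ X := by
  obtain ⟨w⟩ := h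
  induction w with
  | nil => exact hu
  | cons hadj _ ih =>
    apply ih
    by_contra hv
    rw [deleteEdges_adj] at hadj
    exact hadj.2 ⟨hadj.1, _, hu, _, hv, rfl⟩

theorem restricted_of_le (G : SimpleGraph V) [DecidableEq V] [DecidableRel G.Adj] (k s : ℕ)
    (htri : G.CliqueFree 3) (hreg : G.IsRegularOfDegree k) (hk : 5 ≤ k)
    (hs1 : 4 ≤ s) (hs2 : s ≤ 8) (hlam : lambdaS G s ≤ 3 * k) (n : ℕ) :
    ∀ X : Set V, (edgeBoundary G X).ncard = n → s ≤ X.ncard → s ≤ Xᶜ.ncard →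
      n ≤ lambdaS G s → IsRestrictedEdgeCut G s (edgeBoundary G X) := by
  induction n using Nat.strong_induction_on with
  | _ n ih =>
  -- the side statement: a closed small subset of `X` is impossible
  have side : ∀ X : Set V, (edgeBoundary G X).ncard = n → s ≤ X.ncard → s ≤ Xᶜ.ncard →
      n ≤ lambdaS G s → ∀ A : Set V, A.Nonempty → A ⊆ X →
      (∀ x ∈ A, ∀ y ∈ X, G.Adj x y → y ∈ A) → s ≤ A.ncard := by
    intro X hd hX hXc hn A hA hAX hno
    by_contra hlt
    push Not at hlt
    have hsplit := edgeBoundary_split G X A hAX hno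
    have hApos : 1 ≤ A.ncard := (Set.ncard_pos (Set.toFinite _)).2 hA
    have hAge := cut_ge G k htri hreg hk A hApos (by omega)
    have hcard : (X \ A).ncard + A.ncard = X.ncard :=
      Set.ncard_sdiff_add_ncard_of_subset hAX (Set.toFinite _)
    by_cases hB : s ≤ (X \ A).ncard
    · have hc : Xᶜ.ncard ≤ (X \ A)ᶜ.ncard :=
        Set.ncard_le_ncard (Set.compl_subset_compl.2 Set.diff_subset) (Set.toFinite _)
      have := ih (edgeBoundary G (X \ A)).ncard (by omega) (X \ A) rfl hB (by omega) (by omega)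
      have := lambda_le G s _ this
      omega
    · have hBge := cut_ge G k htri hreg hk (X \ A) (by omega) (by omega)
      obtain ⟨a1, a2, a3⟩ := hAge
      obtain ⟨b1, b2, b3⟩ := hBge
      by_cases c1 : 3 ≤ A.ncard
      · have := a3 c1
        omega
      by_cases c2 : 3 ≤ (X \ A).ncard
      · have := b3 c2
        omega
      have := a2 (by omega)
      have := b2 (by omega)
      omega
  intro X hd hX hXc hn
  refine ⟨fun e he => he.1, ?_, ?_⟩
  · intro hc
    obtain ⟨x, hx⟩ := Set.nonempty_of_ncard_ne_zero (s := X) (by omega)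
    obtain ⟨y, hy⟩ := Set.nonempty_of_ncard_ne_zero (s := Xᶜ) (by omega)
    exact hy (reach_side G X (hc.preconnected x y) hx)
  · intro c
    -- components lie on one side
    have gen : ∀ Y : Set V, edgeBoundary G Y = edgeBoundary G X → s ≤ Y.ncard → s ≤ Yᶜ.ncard →
        ∀ v ∈ c.supp, v ∈ Y → s ≤ c.supp.ncard := by
      intro Y hYX hY hYc v hv hvY
      have hsub : c.supp ⊆ Y := by
        intro u hu
        rw [ConnectedComponent.mem_supp_iff] at hu hv
        have hr := ConnectedComponent.exact (hv.trans hu.symm)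
        rw [← hYX] at hr
        exact reach_side G Y hr hvY
      refine side Y (by rw [hYX, hd]) hY hYc hn c.supp ⟨v, hv⟩ hsub ?_
      intro x hx y hy hadj
      refine c.mem_supp_of_adj_mem_supp hx ?_
      rw [deleteEdges_adj, ← hYX]
      refine ⟨hadj, ?_⟩
      rintro ⟨-, a, ha, b, hb, hab⟩
      rw [Sym2.eq_iff] at hab
      rcases hab with ⟨rfl, rfl⟩ | ⟨rfl, rfl⟩
      · exact hb hy
      · exact hb (hsub hx)
    obtain ⟨v, hv⟩ := c.nonempty_supp
    by_cases hvX : v ∈ X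
    · exact gen X rfl hX hXc v hv hvX
    · exact gen Xᶜ (edgeBoundary_compl' G X) hXc (by rwa [compl_compl]) v hv hvX

end Helpers

/-- (Lemma 3.1(c)) With `G` connected triangle-free
vertex-transitive of degree `k ≥ 5`, `4 ≤ s ≤ 8`, `λ_s(G)` existing and at most
`3k`, and `S ≠ T` two `λ_s`-atoms of `G` with `S ∩ T ≠ ∅`:
`d_G(S ∩ T) + d_G(S ∪ T) ≤ 2λ_s(G)`, `d_G(S \ T) + d_G(T \ S) ≤ 2λ_s(G)`,
`|S ∩ T| ≤ s − 1` and `|S \ T| ≤ s − 1`. -/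
theorem statement9 {V : Type*} [Fintype V] [DecidableEq V]
    (G : SimpleGraph V) [DecidableRel G.Adj] (k s : ℕ)
    (hconn : G.Connected) (htri : G.CliqueFree 3) (hvt : VertexTransitive G)
    (hreg : G.IsRegularOfDegree k) (hk : 5 ≤ k)
    (hs1 : 4 ≤ s) (hs2 : s ≤ 8)
    (hex : ∃ F : Set (Sym2 V), IsRestrictedEdgeCut G s F)
    (hlam : lambdaS G s ≤ 3 * k)
    (S T : Set V) (hS : IsLambdaAtom G s S) (hT : IsLambdaAtom G s T)
    (hne : S ≠ T) (hint : (S ∩ T).Nonempty) :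
    (edgeBoundary G (S ∩ T)).ncard + (edgeBoundary G (S ∪ T)).ncard ≤ 2 * lambdaS G s ∧
    (edgeBoundary G (S \ T)).ncard + (edgeBoundary G (T \ S)).ncard ≤ 2 * lambdaS G s ∧
    (S ∩ T).ncard ≤ s - 1 ∧ (S \ T).ncard ≤ s - 1 := by
  have hdS : (edgeBoundary G S).ncard = lambdaS G s := hS.1.2
  have hdT : (edgeBoundary G T).ncard = lambdaS G s := hT.1.2
  have hsub1 := edgeBoundary_submod G S T
  have hsub2 := edgeBoundary_sdiff_submod G S T
  have hres := restricted_of_le G k s htri hreg hk hs1 hs2 hlam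
  have hcardeq : S.ncard = T.ncard := le_antisymm (hS.2 T hT.1) (hT.2 S hS.1)
  have hge : ∀ X : Set V, s ≤ X.ncard → s ≤ Xᶜ.ncard →
      lambdaS G s ≤ (edgeBoundary G X).ncard := by
    intro X h1 h2
    by_contra h
    push Not at h
    have := lambda_le G s _ (hres _ X rfl h1 h2 h.le)
    omega
  have hgt : ∀ X : Set V, s ≤ X.ncard → s ≤ Xᶜ.ncard → X.ncard < S.ncard →
      lambdaS G s < (edgeBoundary G X).ncard := by
    intro X h1 h2 h3
    by_contra h
    push Not at h
    have := hS.2 X ⟨hres _ X rfl h1 h2 h, le_antisymm h (hge X h1 h2)⟩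
    omega
  have hhalf : S.ncard ≤ Sᶜ.ncard := by
    apply hS.2
    unfold IsLambdaFragment
    rw [edgeBoundary_compl']
    exact hS.1
  have hSc : S.ncard + Sᶜ.ncard = Nat.card V := Set.ncard_add_ncard_compl S
  have hUc : (S ∪ T).ncard + (S ∪ T)ᶜ.ncard = Nat.card V := Set.ncard_add_ncard_compl _
  have hIc : (S ∩ T).ncard + (S ∩ T)ᶜ.ncard = Nat.card V := Set.ncard_add_ncard_compl _
  have hDc : (S \ T).ncard + (S \ T)ᶜ.ncard = Nat.card V := Set.ncard_add_ncard_compl _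
  have hEc : (T \ S).ncard + (T \ S)ᶜ.ncard = Nat.card V := Set.ncard_add_ncard_compl _
  have hU : (S ∪ T).ncard + (S ∩ T).ncard = S.ncard + T.ncard := Set.ncard_union_add_ncard_inter S T
  have hD : (S ∩ T).ncard + (S \ T).ncard = S.ncard := Set.ncard_inter_add_ncard_sdiff_eq_ncard S T
  have hE : (T ∩ S).ncard + (T \ S).ncard = T.ncard := Set.ncard_inter_add_ncard_sdiff_eq_ncard T S
  rw [Set.inter_comm] at hE
  have hpos : 0 < (S ∩ T).ncard := (Set.ncard_pos (Set.toFinite _)).2 hint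
  have hDpos : 0 < (S \ T).ncard := by
    rw [Set.ncard_pos (Set.toFinite _), Set.nonempty_iff_ne_empty]
    intro h
    exact hne (Set.eq_of_subset_of_ncard_le (Set.diff_eq_empty.1 h) hcardeq.ge (Set.toFinite _))
  refine ⟨by omega, by omega, ?_, ?_⟩
  · by_contra h
    have h1 := hgt (S ∩ T) (by omega) (by omega) (by omega)
    have h2 := hge (S ∪ T) (by omega) (by omega)
    omega
  · by_contra h
    have h1 := hgt (S \ T) (by omega) (by omega) (by omega)
    have h2 := hgt (T \ S) (by omega) (by omega) (by omega)
    omega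
end

section
/- Let G be a bicritical simple graph. If G is not 4-factor-critical, then there exists a subset X ⊆ V(G) with |X| ≥ 4 such that the number of odd components of G − X equals |X| − 2 and every component of G − X is factor-critical. -/
open SimpleGraph

/-- Adjacency inside the vertex set `A`. -/
def relIn {V : Type*} (G : SimpleGraph V) (A : Set V) (x y : V) : Prop :=
  G.Adj x y ∧ x ∈ A ∧ y ∈ A

/-- The vertices reachable from `x` inside `A`. -/
def compIn {V : Type*} (G : SimpleGraph V) (A : Set V) (x : V) : Set V :=
  {y | Relation.ReflTransGen (relIn G A) x y}

/-- The vertex sets of the odd components of `G[A]`. -/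
def oddIn {V : Type*} (G : SimpleGraph V) (A : Set V) : Set (Set V) :=
  {C | ∃ x ∈ A, C = compIn G A x ∧ Odd C.ncard}

lemma image_supp_eq_compIn {V W : Type*} {H : SimpleGraph W} {G : SimpleGraph V} (f : H ↪g G)
    (x : W) : f '' (H.connectedComponentMk x).supp = compIn G (Set.range f) (f x) := by
  ext y
  simp only [compIn, Set.mem_image, ConnectedComponent.mem_supp_iff, Set.mem_ofPred_eq,
    ConnectedComponent.eq]
  constructor
  · rintro ⟨z, hz, rfl⟩
    have hz := (reachable_iff_reflTransGen _ _).1 hz.symm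
    exact Relation.ReflTransGen.lift (p := relIn G (Set.range f)) f
      (fun a b hab => ⟨f.map_adj_iff.2 hab, ⟨a, rfl⟩, ⟨b, rfl⟩⟩) _ _ hz
  · intro h
    induction h with
    | refl => exact ⟨x, Reachable.refl _, rfl⟩
    | tail _ hbc ih =>
      obtain ⟨z, hz, rfl⟩ := ih
      obtain ⟨hadj, -, ⟨w, rfl⟩⟩ := hbc
      exact ⟨w, (f.map_adj_iff.1 hadj).symm.reachable.trans hz, rfl⟩

lemma ncard_oddComponents_eq {V W : Type*} {H : SimpleGraph W} {G : SimpleGraph V}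
    (f : H ↪g G) {A : Set V} (hA : Set.range f = A) :
    H.oddComponents.ncard = (oddIn G A).ncard := by
  subst hA
  have hinj : Function.Injective (fun c : H.ConnectedComponent => f '' c.supp) := fun c d h =>
    ConnectedComponent.supp_injective (f.injective.image_injective h)
  rw [← Set.ncard_image_of_injective _ hinj]
  congr 1
  ext C
  simp only [Set.mem_image, Set.mem_ofPred_eq, oddIn, Set.exists_range_iff]
  constructor
  · rintro ⟨c, hc, rfl⟩
    induction c using ConnectedComponent.ind with
    | h x =>
      refine ⟨x, image_supp_eq_compIn f x, ?_⟩
      rwa [Set.ncard_image_of_injective _ f.injective]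
  · rintro ⟨x, hx, ho⟩
    refine ⟨H.connectedComponentMk x, ?_, by rw [hx, image_supp_eq_compIn]⟩
    rw [hx, ← image_supp_eq_compIn, Set.ncard_image_of_injective _ f.injective] at ho
    exact ho

lemma compIn_union {V : Type*} {G : SimpleGraph V} {B D : Set V}
    (hn : ∀ x ∈ B, ∀ y ∈ D, ¬ G.Adj x y) (hd : Disjoint B D) {x : V} (hx : x ∈ B) :
    compIn G (B ∪ D) x = compIn G B x ∧ compIn G B x ⊆ B := by
  have h2 : compIn G B x ⊆ B := by
    intro y hy
    rcases Relation.ReflTransGen.cases_tail hy with h | ⟨z, -, h⟩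
    · exact h ▸ hx
    · exact h.2.2
  refine ⟨?_, h2⟩
  ext y
  constructor
  · intro h
    induction h with
    | refl => exact Relation.ReflTransGen.refl
    | @tail b c _ hbc ih =>
      have hb : b ∈ B := h2 ih
      refine Relation.ReflTransGen.tail ih ⟨hbc.1, hb, ?_⟩
      rcases hbc.2.2 with hc | hc
      · exact hc
      · exact absurd hbc.1 (hn b hb c hc)
  · intro h
    exact Relation.ReflTransGen.mono (fun a b hab => ⟨hab.1, Or.inl hab.2.1, Or.inl hab.2.2⟩) _ _ h

lemma oddIn_union {V : Type*} [Finite V] {G : SimpleGraph V} {B D : Set V}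
    (hn : ∀ x ∈ B, ∀ y ∈ D, ¬ G.Adj x y) (hd : Disjoint B D) :
    (oddIn G (B ∪ D)).ncard = (oddIn G B).ncard + (oddIn G D).ncard := by
  have hn' : ∀ x ∈ D, ∀ y ∈ B, ¬ G.Adj x y := fun x hx y hy h => hn y hy x hx h.symm
  have hdis : Disjoint (oddIn G B) (oddIn G D) := by
    rw [Set.disjoint_left]
    rintro C ⟨x, hx, hC, -⟩ ⟨y, hy, hC', -⟩
    have h1 : x ∈ C := by rw [hC]; exact Relation.ReflTransGen.refl
    have h2 : x ∈ D := by
      rw [hC'] at h1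
      exact (compIn_union hn' hd.symm hy).2 h1
    exact Set.disjoint_left.1 hd hx h2
  rw [← Set.ncard_union_eq hdis (Set.toFinite _) (Set.toFinite _)]
  congr 1
  ext C
  constructor
  · rintro ⟨x, hx | hx, hC, ho⟩
    · exact Or.inl ⟨x, hx, by rw [hC, (compIn_union hn hd hx).1], ho⟩
    · exact Or.inr ⟨x, hx, by rw [hC, Set.union_comm, (compIn_union hn' hd.symm hx).1], ho⟩
  · rintro (⟨x, hx, hC, ho⟩ | ⟨x, hx, hC, ho⟩)
    · exact ⟨x, Or.inl hx, by rw [hC, (compIn_union hn hd hx).1], ho⟩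
    · exact ⟨x, Or.inr hx, by rw [hC, Set.union_comm, (compIn_union hn' hd.symm hx).1], ho⟩

lemma odd_oddIn {V : Type*} [Finite V] (G : SimpleGraph V) (A : Set V) :
    Odd (oddIn G A).ncard ↔ Odd A.ncard := by
  rw [← ncard_oddComponents_eq (Embedding.induce A : G.induce A ↪g G) (by
    ext; simp [Embedding.induce]), odd_ncard_oddComponents, Nat.card_coe_set_eq]

/-- Tutte's theorem for an embedded induced subgraph. -/
lemma tutte_in {V W : Type*} [Finite V] {H : SimpleGraph W} {G : SimpleGraph V}
    (f : H ↪g G) {A : Set V} (hA : Set.range f = A) :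
    (∃ M : H.Subgraph, M.IsPerfectMatching) ↔
      ∀ U ⊆ A, (oddIn G (A \ U)).ncard ≤ U.ncard := by
  have : Finite W := Finite.of_injective f f.injective
  have key : ∀ u : Set W, ((⊤ : H.Subgraph).deleteVerts u).coe.oddComponents.ncard =
      (oddIn G (A \ f '' u)).ncard := by
    intro u
    let g : ((⊤ : H.Subgraph).deleteVerts u).coe ↪g G :=
      { toFun := fun x => f x.1
        inj' := fun a b h => Subtype.ext (f.injective h)
        map_rel_iff' := by
          rintro ⟨a, ha⟩ ⟨b, hb⟩
          have ha' := ha.2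
          have hb' := hb.2
          simp only [Subgraph.coe_adj, Subgraph.deleteVerts_adj, Subgraph.verts_top,
            Set.mem_univ, ha', hb', not_false_eq_true, true_and, Subgraph.top_adj]
          exact f.map_adj_iff }
    refine ncard_oddComponents_eq g ?_
    ext y
    simp only [Set.mem_range, ← hA, Set.mem_sdiff, Set.mem_image]
    constructor
    · rintro ⟨⟨a, ha⟩, rfl⟩
      refine ⟨⟨a, rfl⟩, ?_⟩
      rintro ⟨b, hb, hab⟩
      have : b = a := f.injective hab
      exact ha.2 (this ▸ hb)
    · rintro ⟨⟨a, rfl⟩, ha⟩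
      exact ⟨⟨a, ⟨trivial, fun h => ha ⟨a, h, rfl⟩⟩⟩, rfl⟩
  rw [tutte]
  constructor
  · intro h U hU
    have h1 := h (f ⁻¹' U)
    rw [IsTutteViolator, key, Set.image_preimage_eq_of_subset (by rwa [hA])] at h1
    have h2 := Set.ncard_image_of_injective (f ⁻¹' U) f.injective
    rw [Set.image_preimage_eq_of_subset (by rwa [hA])] at h2
    omega
  · intro h u
    rw [IsTutteViolator, key, ← Set.ncard_image_of_injective u f.injective, not_lt]
    exact h _ (by rw [← hA]; exact Set.image_subset_range _ _)

/-- If a bicritical graph `G` is not 4-factor-critical, then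
there is a vertex set `X` with `|X| ≥ 4` such that `c₀(G − X) = |X| − 2` and
every component of `G − X` is factor-critical. -/
theorem statement11 {V : Type*} [Fintype V] [DecidableEq V]
    (G : SimpleGraph V)
    (hbic : PFactorCritical G 2) (hnfc : ¬ PFactorCritical G 4) :
    ∃ X : Set V, 4 ≤ X.ncard ∧ oddComponentCount G X = X.ncard - 2 ∧
      ∀ c : (G.induce Xᶜ).ConnectedComponent,
        IsFactorCritical ((G.induce Xᶜ).induce c.supp) := by
  have rng : ∀ A : Set V, Set.range (Embedding.induce A : G.induce A ↪g G) = A := by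
    intro A; ext; simp [Embedding.induce]
  -- upper bound from bicriticality
  have ub : ∀ X : Set V, 2 ≤ X.ncard → (oddIn G Xᶜ).ncard + 2 ≤ X.ncard := by
    intro X hX
    obtain ⟨P, hPX, hP⟩ := Set.exists_subset_card_eq hX
    have h := (tutte_in _ (rng Pᶜ)).1 (hbic P hP) (X \ P) (fun x hx => hx.2)
    have e : Pᶜ \ (X \ P) = Xᶜ := by
      ext x
      have := @hPX x
      simp only [Set.mem_sdiff, Set.mem_compl_iff]
      tauto
    rw [e] at h
    have := Set.ncard_sdiff_add_ncard_of_subset hPX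
    omega
  -- a bad set of size four
  simp only [PFactorCritical, not_forall] at hnfc
  obtain ⟨Y, hY, hYn⟩ := hnfc
  have hVeven : Even (Nat.card V) := by
    obtain ⟨P, hPX, hP⟩ := Set.exists_subset_card_eq (show 2 ≤ Y.ncard by omega)
    have h1 := ub P hP.ge
    have h2 := odd_oddIn G Pᶜ
    have h3 := Set.ncard_add_ncard_compl P
    rw [show (oddIn G Pᶜ).ncard = 0 by omega] at h2
    rw [Nat.even_iff]
    simp only [Nat.odd_iff] at h2
    omega
  have par : ∀ X : Set V, (oddIn G Xᶜ).ncard % 2 = X.ncard % 2 := by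
    intro X
    have h2 := odd_oddIn G Xᶜ
    have h3 := Set.ncard_add_ncard_compl X
    rw [Nat.even_iff] at hVeven
    simp only [Nat.odd_iff] at h2
    omega
  have hne : {X : Set V | 4 ≤ X.ncard ∧ X.ncard ≤ (oddIn G Xᶜ).ncard + 2}.Nonempty := by
    rw [tutte_in _ (rng Yᶜ)] at hYn
    push Not at hYn
    obtain ⟨U, hU, hlt⟩ := hYn
    have hd : Disjoint Y U := Set.disjoint_left.2 fun x hx hxU => hU hxU hx
    have hc := Set.ncard_union_eq hd (Set.toFinite _) (Set.toFinite _)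
    have e : Yᶜ \ U = (Y ∪ U)ᶜ := by
      ext x; simp [not_or]
    rw [e] at hlt
    have := par (Y ∪ U)
    exact ⟨Y ∪ U, by omega, by omega⟩
  obtain ⟨X, ⟨hX4, hXo⟩, hmax⟩ := Set.exists_max_image _ Set.ncard (Set.toFinite _) hne
  have hXe : (oddIn G Xᶜ).ncard + 2 = X.ncard := le_antisymm (ub X (by omega)) hXo
  refine ⟨X, hX4, ?_, ?_⟩
  · have : oddComponentCount G X = (oddIn G Xᶜ).ncard := ncard_oddComponents_eq _ (rng Xᶜ)
    omega
  intro c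
  -- the component as a vertex set of `G`
  let f : (G.induce Xᶜ).induce c.supp ↪g G :=
    (Embedding.induce Xᶜ : G.induce Xᶜ ↪g G).comp (Embedding.induce c.supp)
  obtain ⟨C, hC⟩ : ∃ C, Set.range f = C := ⟨_, rfl⟩
  have hCX : C ⊆ Xᶜ := by
    rw [← hC]; rintro _ ⟨x, rfl⟩; exact x.1.2
  have hCmem : ∀ (x : V) (hx : x ∈ Xᶜ), x ∈ C ↔ (⟨x, hx⟩ : ↥Xᶜ) ∈ c.supp := by
    intro x hx
    rw [← hC]
    constructor
    · rintro ⟨y, rfl⟩; exact y.2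
    · intro h; exact ⟨⟨⟨x, hx⟩, h⟩, rfl⟩
  have hnadj : ∀ x ∈ Xᶜ \ C, ∀ y ∈ C, ¬ G.Adj x y := by
    rintro x ⟨hx, hxC⟩ y hy hadj
    refine hxC ((hCmem x hx).2 ?_)
    have hy' := (hCmem y (hCX hy)).1 hy
    exact c.mem_supp_of_adj_mem_supp hy' (show G.Adj y x from hadj.symm)
  have hC1 : (oddIn G C).ncard ≤ 1 := by
    rw [← ncard_oddComponents_eq f hC]
    have : Subsingleton ((G.induce Xᶜ).induce c.supp).ConnectedComponent :=
      c.connected_toSimpleGraph.preconnected.subsingleton_connectedComponent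
    exact Set.ncard_le_one_of_subsingleton _
  -- moving a nonempty subset of `C` into `X`
  have key : ∀ S ⊆ C, S.Nonempty →
      (oddIn G (C \ S)).ncard + 1 ≤ S.ncard + (oddIn G C).ncard := by
    intro S hS hSne
    by_contra hcon
    have e1 : Xᶜ = (Xᶜ \ C) ∪ C := by rw [Set.sdiff_union_of_subset hCX]
    have h1 := oddIn_union hnadj Set.disjoint_sdiff_left
    rw [← e1] at h1
    have e2 : (X ∪ S)ᶜ = (Xᶜ \ C) ∪ (C \ S) := by
      ext x
      have h1 := @hS x
      have h2 := @hCX x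
      simp only [Set.mem_compl_iff, Set.mem_union, Set.mem_sdiff] at *
      tauto
    have h2 := oddIn_union (G := G) (B := Xᶜ \ C) (D := C \ S)
      (fun x hx y hy => hnadj x hx y hy.1)
      (Set.disjoint_sdiff_left.mono_right Set.sdiff_subset)
    rw [← e2] at h2
    have hd : Disjoint X S := Set.disjoint_left.2 fun x hx hxS => hCX (hS hxS) hx
    have hc := Set.ncard_union_eq hd (Set.toFinite _) (Set.toFinite _)
    have hpos : 0 < S.ncard := (Set.ncard_pos (Set.toFinite _)).2 hSne
    have := hmax (X ∪ S) ⟨by omega, by omega⟩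
    omega
  have sub : ∀ S ⊆ C, (C \ S).ncard + S.ncard = C.ncard := fun S hS =>
    Set.ncard_sdiff_add_ncard_of_subset hS
  have podd : ∀ A : Set V, (oddIn G A).ncard % 2 = A.ncard % 2 := by
    intro A
    have := odd_oddIn G A
    simp only [Nat.odd_iff] at this
    omega
  intro v
  have hvC : f v ∈ C := hC ▸ ⟨v, rfl⟩
  -- `C` is odd
  have hodd : (oddIn G C).ncard = 1 := by
    have h1 := key {f v} (by simpa using hvC) ⟨_, rfl⟩
    have h2 := sub {f v} (by simpa using hvC)
    have h3 := podd C
    have h4 := podd (C \ {f v})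
    rw [Set.ncard_singleton] at h1 h2
    omega
  let g : ((G.induce Xᶜ).induce c.supp).induce ({v}ᶜ) ↪g G := f.comp (Embedding.induce _)
  have hg : Set.range g = C \ {f v} := by
    rw [← hC]
    ext y
    constructor
    · rintro ⟨x, rfl⟩
      exact ⟨⟨x.1, rfl⟩, fun h => x.2 (f.injective h)⟩
    · rintro ⟨⟨x, rfl⟩, hx⟩
      exact ⟨⟨x, fun h => hx (by rw [Set.mem_singleton_iff.1 h]; rfl)⟩, rfl⟩
  rw [tutte_in g hg]
  intro U hU
  have hvU : f v ∉ U := fun h => (hU h).2 rfl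
  have hSC : insert (f v) U ⊆ C := Set.insert_subset hvC fun x hx => (hU hx).1
  have h1 := key (insert (f v) U) hSC ⟨f v, Or.inl rfl⟩
  have e : (C \ {f v}) \ U = C \ insert (f v) U := by
    ext x; simp [not_or, and_assoc]
  have h2 := sub _ hSC
  have h3 := podd C
  have h4 := podd (C \ insert (f v) U)
  have h5 := Set.ncard_insert_of_notMem hvU (Set.toFinite _)
  rw [e]
  omega
end
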